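/- arXiv:math/0512420 — 3 statements merged into one kernel-verified Lean document; each statement's English description precedes it below -/
import Mathlib

section
/- Let G be a graph and v, w distinct vertices with N(v) ⊆ N(w). Then the independence complex Ind(G) collapses onto Ind(G \ {w}); in particular the two complexes are homotopy equivalent. -/
open SimpleGraph

/-- A claw in `G` on center `u` and leaves `v₁, v₂, v₃`. -/
def SimpleGraph.IsClaw {V : Type*} (G : SimpleGraph V) (u v₁ v₂ v₃ : V) : Prop :=
  v₁ ≠ v₂ ∧ v₁ ≠ v₃ ∧ v₂ ≠ v₃ ∧
  G.Adj u v₁ ∧ G.Adj u v₂ ∧ G.Adj u v₃ ∧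
  ¬G.Adj v₁ v₂ ∧ ¬G.Adj v₁ v₃ ∧ ¬G.Adj v₂ v₃

/-- A graph is claw-free if it has no induced claw. -/
def SimpleGraph.ClawFree {V : Type*} (G : SimpleGraph V) : Prop :=
  ∀ u v₁ v₂ v₃ : V, ¬ G.IsClaw u v₁ v₂ v₃

/-- The closed neighborhood `Ṅ(v) = N(v) ∪ {v}`. -/
def SimpleGraph.closedNbhd {V : Type*} (G : SimpleGraph V) (v : V) : Set V :=
  insert v (G.neighborSet v)

/-- The set of faces of the independence complex `Ind(G)`. -/
def indepFaces {V : Type*} (G : SimpleGraph V) : Set (Finset V) :=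
  {s | ∀ a ∈ s, ∀ b ∈ s, ¬ G.Adj a b}

/-- The geometric realization of an abstract simplicial complex with vertex set `V`. -/
def realization {V : Type*} (K : Set (Finset V)) : Type _ :=
  {f : V → ℝ // (∀ v, 0 ≤ f v) ∧ (∑ᶠ v, f v) = 1 ∧ ∃ s ∈ K, {v | f v ≠ 0} = ↑s}

instance {V : Type*} (K : Set (Finset V)) : TopologicalSpace (realization K) :=
  instTopologicalSpaceSubtype

/-- A space is `n`-connected (`n : ℤ`) if it is nonempty when `n ≥ -1` and every continuous
map from the `i`-sphere extends to the `(i+1)`-ball for all `0 ≤ i ≤ n`. -/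
def IsNConnected (n : ℤ) (X : Type*) [TopologicalSpace X] : Prop :=
  (-1 ≤ n → Nonempty X) ∧
  ∀ i : ℕ, (i : ℤ) ≤ n →
    ∀ f : C(Metric.sphere (0 : EuclideanSpace ℝ (Fin (i + 1))) 1, X),
      ∃ g : C(Metric.closedBall (0 : EuclideanSpace ℝ (Fin (i + 1))) 1, X),
        ∀ x : Metric.sphere (0 : EuclideanSpace ℝ (Fin (i + 1))) 1,
          g ⟨x.1, Metric.sphere_subset_closedBall x.2⟩ = f x

/-- Relation generating the unreduced suspension: glue `X × {0}` to a south pole and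
`X × {1}` to a north pole. -/
def SuspRel (X : Type*) : X × unitInterval ⊕ Bool → X × unitInterval ⊕ Bool → Prop :=
  fun a b => (∃ x, a = Sum.inl (x, 0) ∧ b = Sum.inr false) ∨
    (∃ x, a = Sum.inl (x, 1) ∧ b = Sum.inr true)

/-- The unreduced suspension of a space. -/
def Susp (X : Type*) [TopologicalSpace X] : Type _ := Quot (SuspRel X)

instance (X : Type*) [TopologicalSpace X] : TopologicalSpace (Susp X) :=
  instTopologicalSpaceQuot

/-- The north pole of a suspension. -/
def Susp.north (X : Type*) [TopologicalSpace X] : Susp X := Quot.mk _ (Sum.inr true)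

/-- Relation generating the wedge sum of a family of pointed spaces. -/
def WedgeRel {ι : Type*} (X : ι → Type*) (pt : ∀ i, X i) :
    (Σ i, X i) ⊕ Unit → (Σ i, X i) ⊕ Unit → Prop :=
  fun a b => ∃ i, a = Sum.inl ⟨i, pt i⟩ ∧ b = Sum.inr ()

/-- The wedge sum of a family of pointed spaces. -/
def Wedge {ι : Type*} (X : ι → Type*) [∀ i, TopologicalSpace (X i)] (pt : ∀ i, X i) :
    Type _ :=
  Quot (WedgeRel X pt)

instance {ι : Type*} (X : ι → Type*) [∀ i, TopologicalSpace (X i)] (pt : ∀ i, X i) :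
    TopologicalSpace (Wedge X pt) :=
  instTopologicalSpaceQuot

/-- The graph `L^k_n`: vertices `{1, …, n}`, with `i < j` adjacent iff `j - i < k`. -/
def lineGraphL (n k : ℕ) : SimpleGraph (Fin n) :=
  SimpleGraph.fromRel (fun i j => (i : ℕ) < j ∧ (j : ℕ) - i < k)

/-- The graph `C^k_n`: vertices `{1, …, n}`, with `i < j` adjacent iff `j - i < k` or
`(n + i) - j < k`. -/
def circGraphC (n k : ℕ) : SimpleGraph (Fin n) :=
  SimpleGraph.fromRel (fun i j => (i : ℕ) < j ∧ ((j : ℕ) - i < k ∨ (n + i) - j < k))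

/-- One elementary collapse step: remove a free face `σ` together with the unique face
`τ` properly containing it (with `τ` of one dimension higher). -/
def ElemCollapse {V : Type*} (K L : Set (Finset V)) : Prop :=
  ∃ σ τ : Finset V, σ ∈ K ∧ τ ∈ K ∧ σ ⊂ τ ∧ τ.card = σ.card + 1 ∧
    (∀ ρ ∈ K, σ ⊂ ρ → ρ = τ) ∧ L = K \ {σ, τ}

/-- `K` collapses onto `L` if there is a finite sequence of elementary collapses from
`K` to `L`. -/
def Collapses {V : Type*} (K L : Set (Finset V)) : Prop :=
  Relation.ReflTransGen ElemCollapse K L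

/-- A finite family of sets that is closed under toggling `v` in its members containing `w`
collapses onto its members avoiding `w`. -/
theorem collapses_of_insert_mem_iff {V : Type*} [Finite V] [DecidableEq V] {v w : V}
    (hvw : v ≠ w) (K : Set (Finset V))
    (hK : ∀ σ : Finset V, w ∈ σ → v ∉ σ → (insert v σ ∈ K ↔ σ ∈ K)) :
    Collapses K {s ∈ K | w ∉ s} := by
  induction hn : K.ncard using Nat.strong_induction_on generalizing K with
  | _ n ih =>
  by_cases hne : {σ | σ ∈ K ∧ w ∈ σ ∧ v ∉ σ}.Nonempty
  · obtain ⟨σ, ⟨hσK, hwσ, hvσ⟩, hmax⟩ := (Set.toFinite _).exists_maximal hne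
    have hfree : ∀ ρ ∈ K, σ ⊂ ρ → ρ = insert v σ := by
      intro ρ hρ hσρ
      have hwρ : w ∈ ρ := hσρ.1 hwσ
      by_cases hvρ : v ∈ ρ
      · have hsub : σ ⊆ ρ.erase v := fun x hx =>
          Finset.mem_erase.2 ⟨fun hxv => hvσ (hxv ▸ hx), hσρ.1 hx⟩
        have hmem : ρ.erase v ∈ K :=
          (hK _ (Finset.mem_erase.2 ⟨hvw.symm, hwρ⟩) (Finset.notMem_erase v ρ)).1
            (by rwa [Finset.insert_erase hvρ])
        have hle := hmax ⟨hmem, Finset.mem_erase.2 ⟨hvw.symm, hwρ⟩, Finset.notMem_erase v ρ⟩ hsub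
        rw [hsub.antisymm hle, Finset.insert_erase hvρ]
      · exact absurd (hmax ⟨hρ, hwρ, hvρ⟩ hσρ.1) hσρ.2
    have hstep : ElemCollapse K (K \ {σ, insert v σ}) :=
      ⟨σ, insert v σ, hσK, (hK σ hwσ hvσ).2 hσK, Finset.ssubset_insert hvσ,
        Finset.card_insert_of_notMem hvσ, hfree, rfl⟩
    have hlt : (K \ {σ, insert v σ}).ncard < n :=
      hn ▸ Set.ncard_lt_ncard ⟨Set.sdiff_subset, fun hsub => (hsub hσK).2 (Or.inl rfl)⟩
        (Set.toFinite K)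
    have hrest := ih _ hlt (K \ {σ, insert v σ}) (by
      intro ρ hwρ hvρ
      have hne : insert v ρ ≠ σ := fun heq => hvσ (heq ▸ Finset.mem_insert_self v ρ)
      have hne' : ρ ≠ insert v σ := fun heq => hvρ (heq ▸ Finset.mem_insert_self v σ)
      have hinj : insert v ρ = insert v σ ↔ ρ = σ :=
        ⟨fun heq => by rw [← Finset.erase_insert hvρ, heq, Finset.erase_insert hvσ],
          fun heq => by rw [heq]⟩
      simp [hK ρ hwρ hvρ, hne, hne', hinj]) rfl
    have heq : {s ∈ K \ {σ, insert v σ} | w ∉ s} = {s ∈ K | w ∉ s} := by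
      ext s
      refine ⟨fun hs => ⟨hs.1.1, hs.2⟩, fun hs => ⟨⟨hs.1, ?_⟩, hs.2⟩⟩
      rintro (rfl | rfl)
      exacts [hs.2 hwσ, hs.2 (Finset.mem_insert_of_mem hwσ)]
    exact Relation.ReflTransGen.head hstep (heq ▸ hrest)
  · have heq : {s ∈ K | w ∉ s} = K := by
      refine Set.sep_eq_self_iff_mem_true.2 fun s hs hws => hne ?_
      by_cases hvs : v ∈ s
      · have hw : w ∈ s.erase v := Finset.mem_erase.2 ⟨hvw.symm, hws⟩
        have hv : v ∉ s.erase v := Finset.notMem_erase v s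
        exact ⟨s.erase v, (hK _ hw hv).1 (by rwa [Finset.insert_erase hvs]), hw, hv⟩
      · exact ⟨s, hs, hws, hvs⟩
    rw [heq]
    exact Relation.ReflTransGen.refl

theorem not_adj_of_neighborSet_subset {V : Type*} {G : SimpleGraph V} {v w x : V}
    (h : G.neighborSet v ⊆ G.neighborSet w) (hx : ¬ G.Adj x w) : ¬ G.Adj x v :=
  fun hxv => hx (h hxv.symm).symm

theorem insert_mem_indepFaces_iff {V : Type*} [DecidableEq V] {G : SimpleGraph V} {v w : V}
    (h : G.neighborSet v ⊆ G.neighborSet w) {σ : Finset V} (hw : w ∈ σ) :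
    insert v σ ∈ indepFaces G ↔ σ ∈ indepFaces G := by
  refine ⟨fun hσ a ha b hb =>
    hσ a (Finset.mem_insert_of_mem ha) b (Finset.mem_insert_of_mem hb), fun hσ a ha b hb => ?_⟩
  have key : ∀ x ∈ σ, ¬ G.Adj x v := fun x hx =>
    not_adj_of_neighborSet_subset h (hσ x hx w hw)
  rcases Finset.mem_insert.1 ha with rfl | haσ <;> rcases Finset.mem_insert.1 hb with rfl | hbσ
  · exact G.loopless.irrefl _
  · exact fun hab => key b hbσ hab.symm
  · exact key a haσ
  · exact hσ a haσ b hbσ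

theorem exists_mem_indepFaces_support_iff {V : Type*} [Finite V] {G : SimpleGraph V}
    {f : V → ℝ} :
    (∃ s ∈ indepFaces G, {v | f v ≠ 0} = ↑s) ↔ ∀ a b, f a ≠ 0 → f b ≠ 0 → ¬ G.Adj a b := by
  constructor
  · rintro ⟨s, hs, hfs⟩ a b ha hb
    have hmem : ∀ x, f x ≠ 0 → x ∈ s := fun x hx =>
      Finset.mem_coe.1 (hfs ▸ (show x ∈ {v | f v ≠ 0} from hx))
    exact hs a (hmem a ha) b (hmem b hb)
  · intro hf
    refine ⟨(Set.toFinite {v | f v ≠ 0}).toFinset, fun a ha b hb => ?_, by simp⟩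
    exact hf a b (by simpa using ha) (by simpa using hb)

theorem realization_not_adj {V : Type*} [Finite V] {G : SimpleGraph V}
    (f : realization (indepFaces G)) {a b : V} (ha : f.1 a ≠ 0) (hb : f.1 b ≠ 0) :
    ¬ G.Adj a b :=
  exists_mem_indepFaces_support_iff.1 f.2.2.2 a b ha hb

/-- Maps into the independence complex that pointwise lie in a common simplex are homotopic. -/
theorem homotopic_of_not_adj {X V : Type*} [TopologicalSpace X] [Fintype V] {G : SimpleGraph V}
    (α β : C(X, realization (indepFaces G)))
    (h : ∀ x a b, (α x).1 a ≠ 0 → (β x).1 b ≠ 0 → ¬ G.Adj a b) : α.Homotopic β := by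
  have hα : Continuous fun x => (α x).1 := continuous_subtype_val.comp α.continuous
  have hβ : Continuous fun x => (β x).1 := continuous_subtype_val.comp β.continuous
  refine ⟨⟨⟨fun p => ⟨fun a => (1 - (p.1 : ℝ)) * (α p.2).1 a + p.1 * (β p.2).1 a,
    fun a => ?_, ?_, ?_⟩, ?_⟩, fun x => ?_, fun x => ?_⟩⟩
  · exact add_nonneg (mul_nonneg (sub_nonneg.2 p.1.2.2) ((α p.2).2.1 a))
      (mul_nonneg p.1.2.1 ((β p.2).2.1 a))
  · have h₁ := (α p.2).2.2.1
    have h₂ := (β p.2).2.2.1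
    rw [finsum_eq_sum_of_fintype] at h₁ h₂ ⊢
    rw [Finset.sum_add_distrib, ← Finset.mul_sum, ← Finset.mul_sum, h₁, h₂]
    ring
  · refine exists_mem_indepFaces_support_iff.2 fun a b ha hb => ?_
    have key : ∀ c, (1 - (p.1 : ℝ)) * (α p.2).1 c + p.1 * (β p.2).1 c ≠ 0 →
        (α p.2).1 c ≠ 0 ∨ (β p.2).1 c ≠ 0 := by
      intro c hc
      by_contra! hzero
      simp [hzero] at hc
    rcases key a ha with ha | ha <;> rcases key b hb with hb | hb
    · exact realization_not_adj _ ha hb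
    · exact h _ a b ha hb
    · exact fun hab => h _ b a hb ha hab.symm
    · exact realization_not_adj _ ha hb
  · refine Continuous.subtype_mk (continuous_pi fun a => ?_) _
    have hαa : Continuous fun x => (α x).1 a := (continuous_apply a).comp hα
    have hβa : Continuous fun x => (β x).1 a := (continuous_apply a).comp hβ
    fun_prop
  · exact Subtype.ext (funext fun a => by simp)
  · exact Subtype.ext (funext fun a => by simp)

theorem finsum_eq_add_finsum_compl_singleton {V : Type*} [Fintype V] (w : V) (f : V → ℝ) :
    ∑ᶠ x, f x = f w + ∑ᶠ x : (({w} : Set V)ᶜ : Set V), f x := by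
  classical
  rw [finsum_eq_sum_of_fintype, Fintype.sum_eq_add_sum_subtype_ne f w]
  congr 1
  exact (finsum_eq_sum_of_fintype fun x : {x // x ≠ w} => f x).symm

open Classical in
/-- The simplicial map of independence complexes sending `w` to `v` and fixing all other
vertices. -/
noncomputable def foldMap {V : Type*} [Fintype V] (G : SimpleGraph V) (v w : V) (hvw : v ≠ w)
    (h : G.neighborSet v ⊆ G.neighborSet w) :
    C(realization (indepFaces G), realization (indepFaces (G.induce ({w} : Set V)ᶜ))) where
  toFun f := ⟨fun x => f.1 x + if x.1 = v then f.1 w else 0, by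
    refine ⟨fun x => add_nonneg (f.2.1 x) ?_, ?_, ?_⟩
    · split_ifs
      exacts [f.2.1 w, le_rfl]
    · have hf := f.2.2.1
      rw [finsum_eq_add_finsum_compl_singleton w] at hf
      rw [finsum_add_distrib (Set.toFinite _) (Set.toFinite _),
        finsum_eq_single _ (⟨v, hvw⟩ : (({w} : Set V)ᶜ : Set V))
          (fun x hx => if_neg fun hxv => hx (Subtype.ext hxv)), if_pos rfl, add_comm, hf]
    · refine exists_mem_indepFaces_support_iff.2 fun a b ha hb => ?_
      have key : ∀ c : (({w} : Set V)ᶜ : Set V), (f.1 c + if c.1 = v then f.1 w else 0) ≠ 0 →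
          f.1 c ≠ 0 ∨ c.1 = v ∧ f.1 w ≠ 0 := by
        intro c hc
        by_contra! hzero
        rw [hzero.1, zero_add] at hc
        exact hc (ite_eq_right_iff.2 hzero.2)
      rw [SimpleGraph.comap_adj]
      change ¬ G.Adj a.1 b.1
      rcases key a ha with ha | ⟨hav, haw⟩ <;> rcases key b hb with hb | ⟨hbv, hbw⟩
      · exact realization_not_adj f ha hb
      · rw [hbv]
        exact not_adj_of_neighborSet_subset h (realization_not_adj f ha hbw)
      · rw [hav]
        exact fun hab =>
          not_adj_of_neighborSet_subset h (realization_not_adj f hb haw) hab.symm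
      · rw [hav, hbv]
        exact G.loopless.irrefl v⟩
  continuous_toFun := by
    refine Continuous.subtype_mk (continuous_pi fun x => ?_) _
    have hc : ∀ a, Continuous fun f : realization (indepFaces G) => f.1 a := fun a =>
      (continuous_apply a).comp continuous_subtype_val
    split_ifs
    exacts [(hc x).add (hc w), (hc x).add continuous_const]

open Classical in
/-- The inclusion of the independence complex of `G \ {w}` into that of `G`. -/
noncomputable def extendByZero {V : Type*} [Fintype V] (G : SimpleGraph V) (w : V) :
    C(realization (indepFaces (G.induce ({w} : Set V)ᶜ)), realization (indepFaces G)) where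
  toFun g := ⟨fun x => if hx : x ≠ w then g.1 ⟨x, hx⟩ else 0, by
    refine ⟨fun x => ?_, ?_, ?_⟩
    · dsimp only
      split_ifs
      exacts [g.2.1 _, le_rfl]
    · rw [finsum_eq_add_finsum_compl_singleton w, dif_neg (not_not.2 rfl), zero_add]
      exact (finsum_congr fun x => dif_pos x.2).trans g.2.2.1
    · refine exists_mem_indepFaces_support_iff.2 fun a b ha hb => ?_
      obtain ⟨haw, ha⟩ := dite_ne_right_iff.1 ha
      obtain ⟨hbw, hb⟩ := dite_ne_right_iff.1 hb
      exact realization_not_adj g ha hb⟩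
  continuous_toFun := by
    refine Continuous.subtype_mk (continuous_pi fun x => ?_) _
    split_ifs
    exacts [(continuous_apply _).comp continuous_subtype_val, continuous_const]

open Classical in
theorem foldMap_comp_extendByZero {V : Type*} [Fintype V] (G : SimpleGraph V) (v w : V)
    (hvw : v ≠ w) (h : G.neighborSet v ⊆ G.neighborSet w) :
    (foldMap G v w hvw h).comp (extendByZero G w) = ContinuousMap.id _ := by
  refine ContinuousMap.ext fun g => Subtype.ext (funext fun x => ?_)
  change dite (x.1 ≠ w) _ _ + ite (x.1 = v) (dite (w ≠ w) _ _) 0 = g.1 x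
  rw [dif_pos (show x.1 ≠ w from x.2), dif_neg (not_not.2 rfl), ite_self, add_zero]

open Classical in
theorem extendByZero_comp_foldMap_homotopic {V : Type*} [Fintype V] (G : SimpleGraph V) (v w : V)
    (hvw : v ≠ w) (h : G.neighborSet v ⊆ G.neighborSet w) :
    ((extendByZero G w).comp (foldMap G v w hvw h)).Homotopic (ContinuousMap.id _) := by
  refine homotopic_of_not_adj _ _ fun f a b ha hb => ?_
  obtain ⟨haw, ha⟩ := dite_ne_right_iff.1 ha
  change f.1 b ≠ 0 at hb
  change (f.1 a + ite (a = v) (f.1 w) 0) ≠ 0 at ha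
  by_cases hfa : f.1 a = 0
  · rw [hfa, zero_add] at ha
    obtain ⟨rfl, hw⟩ := ite_ne_right_iff.1 ha
    exact fun hab => not_adj_of_neighborSet_subset h (realization_not_adj f hb hw) hab.symm
  · exact realization_not_adj f hfa hb

/-- If `v ≠ w` and `N(v) ⊆ N(w)`, then `Ind(G)` collapses onto
`Ind(G \ {w})`; in particular the two complexes are homotopy equivalent. -/
theorem indComplex_collapses_of_nbhd_subset {V : Type*} [Fintype V]
    (G : SimpleGraph V) (v w : V) (hvw : v ≠ w)
    (h : G.neighborSet v ⊆ G.neighborSet w) :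
    Collapses (indepFaces G) {s ∈ indepFaces G | w ∉ s} ∧
    Nonempty (ContinuousMap.HomotopyEquiv (realization (indepFaces G))
      (realization (indepFaces (G.induce ({w} : Set V)ᶜ)))) := by
  classical
  exact ⟨collapses_of_insert_mem_iff hvw _ fun _ hw _ => insert_mem_indepFaces_iff h hw,
    ⟨foldMap G v w hvw h, extendByZero G w, extendByZero_comp_foldMap_homotopic G v w hvw h,
      foldMap_comp_extendByZero G v w hvw h ▸ ContinuousMap.Homotopic.refl _⟩⟩
end

section
/- Let u be a vertex of a graph G such that the induced subgraph G[N(u)] is a complete graph. Then the independence complex Ind(G) is homotopy equivalent to the wedge, over all v ∈ N(u), of the suspensions susp(Ind(G \ Ṅ(v))). -/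
open SimpleGraph

open Topology unitInterval

/-- A continuous surjection `q` from a compact space to a Hausdorff space is a homotopy equivalence
as soon as the identity deforms, compatibly with the fibres of `q`, to a map that is constant on
these fibres. -/
theorem nonempty_homotopyEquiv_of_fiberwise_deformation {X Y : Type*} [TopologicalSpace X]
    [CompactSpace X] [TopologicalSpace Y] [T2Space Y] (q : C(X, Y))
    (hq : Function.Surjective q) (H : C(I × X, X)) (H_zero : ∀ x, H (0, x) = x)
    (H_one : ∀ x y, q x = q y → H (1, x) = H (1, y))
    (H_fiber : ∀ s x y, q x = q y → q (H (s, x)) = q (H (s, y))) :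
    Nonempty (ContinuousMap.HomotopyEquiv X Y) := by
  have hquot : IsQuotientMap q := .of_surjective_continuous hq q.continuous
  let Q : C(I × X, I × Y) := (ContinuousMap.id I).prodMap q
  have hQ : IsQuotientMap Q :=
    .of_surjective_continuous (Function.surjective_id.prodMap hq) Q.continuous
  let H₁ : C(X, X) := H.comp ((ContinuousMap.const X 1).prodMk (ContinuousMap.id X))
  have hH₁ : Function.FactorsThrough H₁ q := fun x y h => H_one x y h
  have hqH : Function.FactorsThrough (q.comp H) Q := by
    rintro ⟨s, x⟩ ⟨s', y⟩ h
    obtain ⟨rfl, h⟩ := Prod.ext_iff.1 h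
    exact H_fiber _ x y h
  let r : C(Y, X) := hquot.lift H₁ hH₁
  let K : C(I × Y, Y) := hQ.lift (q.comp H) hqH
  have hr : ∀ x, r (q x) = H (1, x) := fun x => DFunLike.congr_fun (hquot.lift_comp H₁ hH₁) x
  have hK : ∀ s x, K (s, q x) = q (H (s, x)) :=
    fun s x => DFunLike.congr_fun (hQ.lift_comp (q.comp H) hqH) (s, x)
  refine ⟨⟨q, r, ContinuousMap.Homotopic.symm ⟨⟨H, H_zero, fun x => (hr x).symm⟩⟩,
    ContinuousMap.Homotopic.symm ⟨⟨K, fun y => ?_, fun y => ?_⟩⟩⟩⟩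
  · obtain ⟨x, rfl⟩ := hq y
    exact (hK 0 x).trans (congrArg q (H_zero x))
  · obtain ⟨x, rfl⟩ := hq y
    exact (hK 1 x).trans (congrArg q (hr x).symm)

/-- Version of `nonempty_homotopyEquiv_of_fiberwise_deformation` in which the quotient is given
by an injective map into an ambient space with the same range. -/
theorem nonempty_homotopyEquiv_of_range_eq {X Y E : Type*} [TopologicalSpace X]
    [CompactSpace X] [TopologicalSpace Y] [CompactSpace Y] [TopologicalSpace E] [T2Space E]
    (φ : C(X, E)) (e : C(Y, E)) (he : Function.Injective e) (hrange : Set.range φ = Set.range e)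
    (H : C(I × X, X)) (H_zero : ∀ x, H (0, x) = x)
    (H_one : ∀ x y, φ x = φ y → H (1, x) = H (1, y))
    (H_fiber : ∀ s x y, φ x = φ y → φ (H (s, x)) = φ (H (s, y))) :
    Nonempty (ContinuousMap.HomotopyEquiv X Y) := by
  have hemb : IsClosedEmbedding e := e.continuous.isClosedEmbedding he
  have : T2Space Y := T2Space.of_injective_continuous he e.continuous
  have hex : ∀ x, ∃ y, e y = φ x := fun x => hrange.subset (Set.mem_range_self x)
  choose q hq using hex
  have hqc : Continuous q := by
    rw [hemb.isInducing.continuous_iff, show e ∘ q = φ from funext hq]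
    exact φ.continuous
  have hφ : ∀ x y, q x = q y ↔ φ x = φ y := fun x y => by rw [← hq, ← hq, he.eq_iff]
  refine nonempty_homotopyEquiv_of_fiberwise_deformation ⟨q, hqc⟩ (fun y => ?_) H H_zero
    (fun x y h => H_one x y ((hφ x y).1 h))
    (fun s x y h => (hφ _ _).2 (H_fiber s x y ((hφ x y).1 h)))
  obtain ⟨x, hx⟩ : ∃ x, φ x = e y := hrange.superset (Set.mem_range_self y)
  exact ⟨x, he ((hq x).trans hx)⟩

/-! ### Wedges and suspensions -/

section WedgeSum

instance {X : Type*} [TopologicalSpace X] [CompactSpace X] : CompactSpace (Susp X) :=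
  Quot.compactSpace

instance {ι : Type*} [Finite ι] {X : ι → Type*} [∀ i, TopologicalSpace (X i)]
    [∀ i, CompactSpace (X i)] {pt : ∀ i, X i} : CompactSpace (Wedge X pt) :=
  Quot.compactSpace

theorem Susp.cases {X : Type*} [TopologicalSpace X] (y : Susp X) :
    y = Susp.north X ∨ y = Quot.mk _ (Sum.inr false) ∨
      ∃ x, ∃ t : I, 0 < (t : ℝ) ∧ (t : ℝ) < 1 ∧ y = Quot.mk _ (Sum.inl (x, t)) := by
  obtain ⟨⟨x, t⟩ | ⟨_ | _⟩⟩ := y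
  · by_cases h0 : t = 0
    · subst h0
      exact .inr (.inl (Quot.sound (.inl ⟨x, rfl, rfl⟩)))
    by_cases h1 : t = 1
    · subst h1
      exact .inl (Quot.sound (.inr ⟨x, rfl, rfl⟩))
    exact .inr (.inr ⟨x, t, unitInterval.pos_iff_ne_zero.2 h0, unitInterval.lt_one_iff_ne_one.2 h1,
      rfl⟩)
  · exact .inr (.inl rfl)
  · exact .inl rfl

/-- Maps on the summands that vanish at the base points induce a map on the wedge sum. -/
noncomputable def Wedge.coord {ι E : Type*} [DecidableEq ι] [Zero E] {X : ι → Type*}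
    [∀ i, TopologicalSpace (X i)] {pt : ∀ i, X i} (c : ∀ i, X i → E)
    (hc : ∀ i, c i (pt i) = 0) : Wedge X pt → ι → E :=
  Quot.lift (Sum.elim (fun p => Pi.single p.1 (c p.1 p.2)) fun _ => 0) <| by
    rintro _ _ ⟨i, rfl, rfl⟩
    simp [hc]

theorem Wedge.continuous_coord {ι E : Type*} [DecidableEq ι] [Zero E] [TopologicalSpace E]
    {X : ι → Type*} [∀ i, TopologicalSpace (X i)] {pt : ∀ i, X i} {c : ∀ i, X i → E}
    (hc : ∀ i, c i (pt i) = 0) (hcont : ∀ i, Continuous (c i)) :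
    Continuous (Wedge.coord c hc) := by
  refine continuous_quot_lift _ (Continuous.sumElim (continuous_sigma fun i => ?_)
    continuous_const)
  exact (continuous_single i).comp (hcont i)

theorem Wedge.coord_injective {ι E : Type*} [DecidableEq ι] [Zero E] {X : ι → Type*}
    [∀ i, TopologicalSpace (X i)] {pt : ∀ i, X i} {c : ∀ i, X i → E}
    (hc : ∀ i, c i (pt i) = 0) (hinj : ∀ i, Function.Injective (c i)) :
    Function.Injective (Wedge.coord c hc) := by
  have base : ∀ i x, c i x = 0 →
      (Quot.mk (WedgeRel X pt) (Sum.inl ⟨i, x⟩)) = Quot.mk _ (Sum.inr ()) := by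
    intro i x hx
    obtain rfl := hinj i (hx.trans (hc i).symm)
    exact Quot.sound ⟨i, rfl, rfl⟩
  rintro ⟨⟨i, x⟩ | ⟨⟩⟩ ⟨⟨j, y⟩ | ⟨⟩⟩ h
  · change (Pi.single i (c i x) : ι → E) = Pi.single j (c j y) at h
    by_cases hij : i = j
    · subst hij
      rw [hinj i (Pi.single_injective _ h)]
    · have hx := congrFun h i
      have hy := congrFun h j
      rw [Pi.single_eq_same, Pi.single_eq_of_ne hij] at hx
      rw [Pi.single_eq_same, Pi.single_eq_of_ne (Ne.symm hij)] at hy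
      rw [base i x hx, base j y hy.symm]
  · change (Pi.single i (c i x) : ι → E) = 0 at h
    exact base i x (Pi.single_eq_zero_iff.1 h)
  · change 0 = (Pi.single j (c j y) : ι → E) at h
    exact (base j y (Pi.single_eq_zero_iff.1 h.symm)).symm
  · rfl

end WedgeSum

section Coordinates

variable {V : Type*} {G : SimpleGraph V} {v : V}

theorem continuous_realization_val {K : Set (Finset V)} :
    Continuous (fun x : realization K => x.1) :=
  continuous_subtype_val

open Classical in
/-- Extension by zero of a function on `V \ Ṅ(v)`. -/
noncomputable def extendZero (G : SimpleGraph V) (v : V) (x : ↥(G.closedNbhd v)ᶜ → ℝ)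
    (w : V) : ℝ :=
  if h : w ∈ (G.closedNbhd v)ᶜ then x ⟨w, h⟩ else 0

theorem extendZero_coe (x : ↥(G.closedNbhd v)ᶜ → ℝ) (w : ↥(G.closedNbhd v)ᶜ) :
    extendZero G v x w = x w :=
  dif_pos w.2

theorem extendZero_of_mem (x : ↥(G.closedNbhd v)ᶜ → ℝ) {w : V} (hw : w ∈ G.closedNbhd v) :
    extendZero G v x w = 0 :=
  dif_neg (not_not.2 hw)

theorem mem_closedNbhd_self : v ∈ G.closedNbhd v :=
  Set.mem_insert _ _

theorem mem_closedNbhd_of_adj {w : V} (h : G.Adj v w) : w ∈ G.closedNbhd v :=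
  Set.mem_insert_of_mem _ h

theorem continuous_extendZero (w : V) :
    Continuous fun x : ↥(G.closedNbhd v)ᶜ → ℝ => extendZero G v x w := by
  unfold extendZero
  split_ifs <;> fun_prop

/-- The map on `Ind(G)` that collapses the star of `u`. -/
def starCollapse (G : SimpleGraph V) (u : V) :
    C(realization (indepFaces G), G.neighborSet u → V → ℝ) where
  toFun x v w := x.1 v * x.1 w
  continuous_toFun := by
    have h : ∀ w, Continuous fun x : realization (indepFaces G) => x.1 w :=
      fun w => (continuous_apply w).comp continuous_realization_val
    exact continuous_pi fun v => continuous_pi fun w => (h v).mul (h w)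

theorem starCollapse_apply {u : V} (x : realization (indepFaces G)) (v : G.neighborSet u) (w : V) :
    starCollapse G u x v w = x.1 v * x.1 w :=
  rfl

theorem starCollapse_eq_zero {u : V} {x : realization (indepFaces G)}
    (h : ∀ v, G.Adj u v → x.1 v = 0) : starCollapse G u x = 0 := by
  ext v w
  simp [starCollapse_apply, h v v.2]

section

variable [DecidableEq V]

/-- The point at parameter `t` on the segment from `v` to a point of `Ind(G \ Ṅ(v))`. -/
noncomputable def joinPoint (G : SimpleGraph V) (v : V) (x : ↥(G.closedNbhd v)ᶜ → ℝ) (t : ℝ)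
    (w : V) : ℝ :=
  (1 - t) * Pi.single (M := fun _ => ℝ) v 1 w + t * extendZero G v x w

theorem joinPoint_self (x : ↥(G.closedNbhd v)ᶜ → ℝ) (t : ℝ) : joinPoint G v x t v = 1 - t := by
  simp [joinPoint, extendZero_of_mem x mem_closedNbhd_self]

theorem joinPoint_of_ne (x : ↥(G.closedNbhd v)ᶜ → ℝ) (t : ℝ) {w : V} (hw : w ≠ v) :
    joinPoint G v x t w = t * extendZero G v x w := by
  simp [joinPoint, hw]

theorem joinPoint_zero (x : ↥(G.closedNbhd v)ᶜ → ℝ) : joinPoint G v x 0 = Pi.single v 1 := by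
  ext w
  simp [joinPoint]

/-- Coordinates on the suspension of `Ind(G \ Ṅ(v))`, vanishing exactly at the north pole. -/
noncomputable def suspCoord (G : SimpleGraph V) (v : V) :
    Susp (realization (indepFaces (G.induce (G.closedNbhd v)ᶜ))) → V → ℝ :=
  Quot.lift (Sum.elim (fun p => (1 - (p.2 : ℝ)) • joinPoint G v p.1.1 p.2)
    fun b => if b then 0 else Pi.single v 1) <| by
    rintro _ _ (⟨x, rfl, rfl⟩ | ⟨x, rfl, rfl⟩)
    · simp [joinPoint_zero]
    · simp

theorem suspCoord_north : suspCoord G v (Susp.north _) = 0 :=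
  rfl

theorem suspCoord_south : suspCoord G v (Quot.mk _ (Sum.inr false)) = Pi.single v 1 :=
  rfl

theorem suspCoord_mk (x : realization (indepFaces (G.induce (G.closedNbhd v)ᶜ))) (t : I) :
    suspCoord G v (Quot.mk _ (Sum.inl (x, t))) = (1 - (t : ℝ)) • joinPoint G v x.1 t :=
  rfl

theorem continuous_suspCoord : Continuous (suspCoord G v) := by
  refine continuous_quot_lift _ (Continuous.sumElim (continuous_pi fun w => ?_)
    continuous_of_discreteTopology)
  have hext : Continuous fun p : realization (indepFaces (G.induce (G.closedNbhd v)ᶜ)) × I =>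
      extendZero G v p.1.1 w :=
    (continuous_extendZero w).comp (continuous_realization_val.comp continuous_fst)
  simp only [Pi.smul_apply, joinPoint]
  fun_prop

theorem suspCoord_injective : Function.Injective (suspCoord G v) := by
  have hval : ∀ (x : realization (indepFaces (G.induce (G.closedNbhd v)ᶜ))) (t : I),
      suspCoord G v (Quot.mk _ (Sum.inl (x, t))) v = (1 - (t : ℝ)) * (1 - t) := fun x t => by
    rw [suspCoord_mk, Pi.smul_apply, joinPoint_self, smul_eq_mul]
  have hn : suspCoord G v (Susp.north _) v = 0 := rfl
  have hs : suspCoord G v (Quot.mk _ (Sum.inr false)) v = 1 := by simp [suspCoord_south]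
  intro y z hyz
  have hv := congrFun hyz v
  obtain rfl | rfl | ⟨x, t, ht, ht', rfl⟩ := Susp.cases y <;>
  obtain rfl | rfl | ⟨x', t', hs, hs', rfl⟩ := Susp.cases z
  · rfl
  · rw [hn, hs] at hv
    norm_num at hv
  · rw [hn, hval] at hv
    nlinarith
  · rw [hn, hs] at hv
    norm_num at hv
  · rfl
  · rw [suspCoord_south, hval, Pi.single_eq_same] at hv
    nlinarith
  · rw [hn, hval] at hv
    nlinarith
  · rw [suspCoord_south, hval, Pi.single_eq_same] at hv
    nlinarith
  · rw [hval, hval] at hv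
    have htt : t = t' := Subtype.ext (by nlinarith)
    subst htt
    suffices x = x' by rw [this]
    refine Subtype.ext (funext fun w => ?_)
    have hw : (w : V) ≠ v := by
      intro h
      exact w.2 (h.symm ▸ mem_closedNbhd_self : (w : V) ∈ G.closedNbhd v)
    have := congrFun hyz w
    simp only [suspCoord_mk, Pi.smul_apply, smul_eq_mul, joinPoint_of_ne _ _ hw,
      extendZero_coe] at this
    exact mul_left_cancel₀ ht.ne' (mul_left_cancel₀ (sub_ne_zero.2 ht'.ne') this)

end

end Coordinates

section Realization

variable {V : Type*} [Fintype V] {G : SimpleGraph V}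

/-- The defining conditions of a point of the realization of `Ind(G)`. -/
def IsIndepPoint (G : SimpleGraph V) (f : V → ℝ) : Prop :=
  (∀ v, 0 ≤ f v) ∧ ∑ v, f v = 1 ∧ ∀ a b, G.Adj a b → f a = 0 ∨ f b = 0

theorem isIndepPoint_iff (f : V → ℝ) :
    ((∀ v, 0 ≤ f v) ∧ (∑ᶠ v, f v) = 1 ∧ ∃ s ∈ indepFaces G, {v | f v ≠ 0} = ↑s) ↔
      IsIndepPoint G f := by
  classical
  rw [IsIndepPoint, finsum_eq_sum_of_fintype]
  refine and_congr_right fun _ => and_congr_right fun _ => ⟨?_, fun h => ?_⟩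
  · rintro ⟨s, hs, hfs⟩ a b hab
    by_contra! hne
    have ha : a ∈ (s : Set V) := hfs ▸ hne.1
    have hb : b ∈ (s : Set V) := hfs ▸ hne.2
    exact hs a ha b hb hab
  · refine ⟨Finset.univ.filter fun v => f v ≠ 0, fun a ha b hb hab => ?_, by ext; simp⟩
    have := h a b hab
    simp_all

/-- Points of the realization of `Ind(G)` from the unfolded conditions. -/
def indepPoint (f : V → ℝ) (hf : IsIndepPoint G f) : realization (indepFaces G) :=
  ⟨f, (isIndepPoint_iff f).2 hf⟩

theorem realization_isIndepPoint (x : realization (indepFaces G)) : IsIndepPoint G x.1 :=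
  (isIndepPoint_iff x.1).1 x.2

theorem IsIndepPoint.le_one {f : V → ℝ} (hf : IsIndepPoint G f) (v : V) : f v ≤ 1 :=
  hf.2.1 ▸ Finset.single_le_sum (fun w _ => hf.1 w) (Finset.mem_univ v)

instance : CompactSpace (realization (indepFaces G)) := by
  have hset : {f : V → ℝ | (∀ v, 0 ≤ f v) ∧ (∑ᶠ v, f v) = 1 ∧
      ∃ s ∈ indepFaces G, {v | f v ≠ 0} = ↑s} = {f | IsIndepPoint G f} :=
    Set.ext isIndepPoint_iff
  suffices h : IsCompact {f | IsIndepPoint G f} by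
    rw [← hset] at h
    exact isCompact_iff_compactSpace.1 h
  refine (isCompact_Icc (a := (0 : V → ℝ)) (b := 1)).of_isClosed_subset ?_
    fun f hf => ⟨hf.1, hf.le_one⟩
  simp only [IsIndepPoint, Set.ofPred_and, Set.ofPred_forall, Set.ofPred_or]
  refine .inter (isClosed_iInter fun v => isClosed_le (by fun_prop) (by fun_prop)) (.inter
    (isClosed_eq (by fun_prop) (by fun_prop)) (isClosed_iInter fun a => isClosed_iInter fun b =>
      isClosed_iInter fun _ => .union (isClosed_eq (by fun_prop) (by fun_prop))
        (isClosed_eq (by fun_prop) (by fun_prop))))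

theorem isIndepPoint_single [DecidableEq V] (v : V) : IsIndepPoint G (Pi.single v 1) := by
  refine ⟨fun w => ?_, by simp, fun a b hab => ?_⟩
  · by_cases h : w = v <;> simp [h]
  · by_cases h : a = v
    · right
      subst h
      simp [hab.ne']
    · simp [h]

/-! ### Deforming the star of `u` to `u` -/

section Deformation

open Classical in
/-- The total mass of `f` on the neighbourhood of `u`. -/
noncomputable def nbhdMass (G : SimpleGraph V) (u : V) (f : V → ℝ) : ℝ :=
  ∑ v, if G.Adj u v then f v else 0

open Classical in
/-- The deformation of the star of `u` towards `u`, before normalization. -/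
noncomputable def starDeform (G : SimpleGraph V) (u : V) (s : ℝ) (f : V → ℝ) (w : V) : ℝ :=
  if w = u then max (f u + s / 2 - nbhdMass G u f) 0
  else if G.Adj u w then max (f w - s / 2) 0
  else (1 - s + s * nbhdMass G u f) * f w

variable {u : V} {f : V → ℝ} {s : ℝ}

theorem nbhdMass_eq_zero (h : ∀ v, G.Adj u v → f v = 0) : nbhdMass G u f = 0 := by
  classical
  exact Finset.sum_eq_zero fun v _ => by split_ifs with hv; exacts [h v hv, rfl]

theorem nbhdMass_nonneg (h : ∀ v, 0 ≤ f v) : 0 ≤ nbhdMass G u f :=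
  Finset.sum_nonneg fun v _ => by split_ifs; exacts [h v, le_rfl]

theorem IsIndepPoint.eq_zero_of_adj {a b : V} (hf : IsIndepPoint G f) (hab : G.Adj a b)
    (hb : f b ≠ 0) : f a = 0 :=
  (hf.2.2 a b hab).resolve_right hb

theorem IsIndepPoint.eq_zero_of_nbhd (hu : G.IsClique (G.neighborSet u)) (hf : IsIndepPoint G f)
    {v w : V} (hv : G.Adj u v) (hfv : f v ≠ 0) (hw : G.Adj u w) (hwv : w ≠ v) : f w = 0 :=
  hf.eq_zero_of_adj (hu hw hv hwv) hfv

theorem nbhdMass_eq (hu : G.IsClique (G.neighborSet u)) (hf : IsIndepPoint G f) {v : V}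
    (hv : G.Adj u v) (hfv : f v ≠ 0) : nbhdMass G u f = f v := by
  classical
  rw [nbhdMass, Finset.sum_eq_single v]
  · simp [hv]
  · intro w _ hwv
    split_ifs with hw
    exacts [hf.eq_zero_of_nbhd hu hv hfv hw hwv, rfl]
  · simp

theorem starDeform_nonneg (h : ∀ v, 0 ≤ f v) (hs : 0 ≤ s) (hs' : s ≤ 1) (w : V) :
    0 ≤ starDeform G u s f w := by
  unfold starDeform
  split_ifs
  · exact le_max_right _ _
  · exact le_max_right _ _
  · have := mul_nonneg hs (nbhdMass_nonneg (G := G) (u := u) h)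
    exact mul_nonneg (by linarith) (h w)

theorem starDeform_adj {w : V} (hw : G.Adj u w) :
    starDeform G u s f w = max (f w - s / 2) 0 := by
  simp [starDeform, hw, hw.ne']

theorem starDeform_self :
    starDeform G u s f u = max (f u + s / 2 - nbhdMass G u f) 0 := by
  simp [starDeform]

theorem starDeform_of_not_adj {w : V} (hwu : w ≠ u) (hw : ¬ G.Adj u w) :
    starDeform G u s f w = (1 - s + s * nbhdMass G u f) * f w := by
  simp [starDeform, hw, hwu]

theorem starDeform_zero (hu : G.IsClique (G.neighborSet u)) (hf : IsIndepPoint G f) :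
    starDeform G u 0 f = f := by
  ext w
  by_cases hwu : w = u
  · subst hwu
    rw [starDeform_self]
    by_cases h : ∃ v, G.Adj w v ∧ f v ≠ 0
    · obtain ⟨v, hv, hfv⟩ := h
      rw [nbhdMass_eq hu hf hv hfv, hf.eq_zero_of_adj hv hfv]
      have := hf.1 v
      simpa using this
    · push Not at h
      rw [nbhdMass_eq_zero h]
      have := hf.1 w
      simpa using this
  · by_cases hw : G.Adj u w
    · simpa [starDeform_adj hw] using hf.1 w
    · simp [starDeform_of_not_adj hwu hw]

theorem starDeform_eq_zero_of_eq_zero (hs : 0 ≤ s) {w : V} (hwu : w ≠ u) (hw : f w = 0) :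
    starDeform G u s f w = 0 := by
  by_cases h : G.Adj u w
  · rw [starDeform_adj h, hw]
    exact max_eq_right (by linarith)
  · rw [starDeform_of_not_adj hwu h, hw, mul_zero]

theorem starDeform_adj_or (hu : G.IsClique (G.neighborSet u)) (hf : IsIndepPoint G f)
    (hs : 0 ≤ s) {a b : V} (hab : G.Adj a b) :
    starDeform G u s f a = 0 ∨ starDeform G u s f b = 0 := by
  have key : ∀ w, G.Adj u w → starDeform G u s f u = 0 ∨ starDeform G u s f w = 0 := by
    intro w hw
    by_cases hfw : f w = 0
    · exact .inr (starDeform_eq_zero_of_eq_zero hs hw.ne' hfw)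
    · rw [starDeform_self, starDeform_adj hw, nbhdMass_eq hu hf hw hfw, hf.eq_zero_of_adj hw hfw]
      rcases le_total (f w) (s / 2) with h | h
      · exact .inr (max_eq_right (by linarith))
      · exact .inl (max_eq_right (by linarith))
  by_cases hau : a = u
  · subst hau
    exact key b hab
  by_cases hbu : b = u
  · subst hbu
    exact (key a hab.symm).symm
  exact (hf.2.2 a b hab).imp (starDeform_eq_zero_of_eq_zero hs hau)
    (starDeform_eq_zero_of_eq_zero hs hbu)

theorem starDeform_sum_pos (hu : G.IsClique (G.neighborSet u)) (hf : IsIndepPoint G f)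
    (hs : 0 ≤ s) (hs' : s ≤ 1) : 0 < ∑ w, starDeform G u s f w := by
  classical
  suffices h : ∃ w, 0 < starDeform G u s f w from
    Finset.sum_pos' (fun w _ => starDeform_nonneg hf.1 hs hs' w) (by simpa using h)
  by_cases h : ∃ v, G.Adj u v ∧ f v ≠ 0
  · obtain ⟨v, hv, hfv⟩ := h
    have hpos : 0 < f v := (hf.1 v).lt_of_ne' hfv
    rcases lt_or_ge (s / 2) (f v) with hlt | hle
    · exact ⟨v, by rw [starDeform_adj hv]; exact lt_max_of_lt_left (by linarith)⟩
    · obtain ⟨w, hwv, hfw⟩ : ∃ w, w ≠ v ∧ f w ≠ 0 := by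
        by_contra! hall
        have := hf.2.1
        rw [Finset.sum_eq_single v (fun w _ hw => hall w hw) (by simp)] at this
        linarith
      have hwu : w ≠ u := by
        rintro rfl
        exact hfw (hf.eq_zero_of_adj hv hfv)
      have hw : ¬ G.Adj u w := fun hw => hfw (hf.eq_zero_of_nbhd hu hv hfv hw hwv)
      refine ⟨w, ?_⟩
      rw [starDeform_of_not_adj hwu hw, nbhdMass_eq hu hf hv hfv]
      refine mul_pos ?_ ((hf.1 w).lt_of_ne' hfw)
      nlinarith
  · push Not at h
    rcases hs.eq_or_lt with rfl | hs
    · rw [starDeform_zero hu hf]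
      by_contra! hall
      have := Finset.sum_nonpos fun w (_ : w ∈ Finset.univ) => hall w
      linarith [hf.2.1]
    · refine ⟨u, ?_⟩
      rw [starDeform_self, nbhdMass_eq_zero h]
      exact lt_max_of_lt_left (by linarith [hf.1 u])

theorem isIndepPoint_starDeform (hu : G.IsClique (G.neighborSet u)) (hf : IsIndepPoint G f)
    (hs : 0 ≤ s) (hs' : s ≤ 1) :
    IsIndepPoint G fun w => starDeform G u s f w / ∑ v, starDeform G u s f v := by
  have hpos := starDeform_sum_pos hu hf hs hs'
  refine ⟨fun w => div_nonneg (starDeform_nonneg hf.1 hs hs' w) hpos.le, ?_, fun a b hab => ?_⟩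
  · rw [← Finset.sum_div, div_self hpos.ne']
  · exact (starDeform_adj_or hu hf hs hab).imp (fun h => by simp [h]) (fun h => by simp [h])

theorem continuous_starDeform (w : V) :
    Continuous fun p : ℝ × (V → ℝ) => starDeform G u p.1 p.2 w := by
  classical
  have hmass : Continuous fun p : ℝ × (V → ℝ) => nbhdMass G u p.2 := by
    refine continuous_finsetSum _ fun v _ => ?_
    split_ifs <;> fun_prop
  unfold starDeform
  split_ifs <;> fun_prop

theorem starDeform_one_eq_zero (h : ∀ v, G.Adj u v → f v = 0) {w : V} (hwu : w ≠ u) :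
    starDeform G u 1 f w = 0 := by
  by_cases hw : G.Adj u w
  · exact starDeform_eq_zero_of_eq_zero zero_le_one hwu (h w hw)
  · simp [starDeform_of_not_adj hwu hw, nbhdMass_eq_zero h]

/-- The homotopy of `Ind(G)` deforming the star of `u` to the point `u`. -/
noncomputable def starHomotopy (hu : G.IsClique (G.neighborSet u)) :
    C(I × realization (indepFaces G), realization (indepFaces G)) where
  toFun p := indepPoint _
    (isIndepPoint_starDeform hu (realization_isIndepPoint p.2) p.1.2.1 p.1.2.2)
  continuous_toFun := by
    refine Continuous.subtype_mk (continuous_pi fun w => ?_) _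
    have hval : Continuous fun p : I × realization (indepFaces G) => ((p.1 : ℝ), p.2.1) :=
      (continuous_subtype_val.comp continuous_fst).prodMk
        (continuous_realization_val.comp continuous_snd)
    have hc : ∀ w, Continuous fun p : I × realization (indepFaces G) =>
        starDeform G u (p.1 : ℝ) p.2.1 w := fun w => (continuous_starDeform w).comp hval
    exact (hc w).div (continuous_finsetSum _ fun v _ => hc v) fun p =>
      (starDeform_sum_pos hu (realization_isIndepPoint p.2) p.1.2.1 p.1.2.2).ne'

theorem starHomotopy_val (hu : G.IsClique (G.neighborSet u)) (s : I)
    (x : realization (indepFaces G)) (w : V) : (starHomotopy hu (s, x)).1 w =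
      starDeform G u s x.1 w / ∑ v, starDeform G u s x.1 v :=
  rfl

theorem starHomotopy_zero (hu : G.IsClique (G.neighborSet u)) (x : realization (indepFaces G)) :
    starHomotopy hu (0, x) = x := by
  refine Subtype.ext (funext fun w => ?_)
  have hx := realization_isIndepPoint x
  rw [starHomotopy_val, Set.Icc.coe_zero, starDeform_zero hu hx, hx.2.1, div_one]

theorem starHomotopy_one [DecidableEq V] (hu : G.IsClique (G.neighborSet u))
    (x : realization (indepFaces G)) (h : ∀ v, G.Adj u v → x.1 v = 0) :
    starHomotopy hu (1, x) = indepPoint (Pi.single u 1) (isIndepPoint_single u) := by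
  refine Subtype.ext (funext fun w => ?_)
  have hx := realization_isIndepPoint x
  have hsum : ∑ v, starDeform G u 1 x.1 v = starDeform G u 1 x.1 u :=
    Finset.sum_eq_single u (fun v _ hv => starDeform_one_eq_zero h hv) (by simp)
  have hpos := starDeform_sum_pos hu hx zero_le_one le_rfl
  rw [starHomotopy_val, Set.Icc.coe_one, hsum]
  rw [hsum] at hpos
  change _ = Pi.single (M := fun _ => ℝ) u 1 w
  by_cases hw : w = u
  · subst hw
    rw [div_self hpos.ne', Pi.single_eq_same]
  · rw [starDeform_one_eq_zero h hw, zero_div, Pi.single_eq_of_ne hw]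

theorem starHomotopy_eq_zero (hu : G.IsClique (G.neighborSet u)) (s : I)
    (x : realization (indepFaces G)) {v : V} (hv : G.Adj u v) (h : x.1 v = 0) :
    (starHomotopy hu (s, x)).1 v = 0 := by
  rw [starHomotopy_val, starDeform_eq_zero_of_eq_zero s.2.1 hv.ne' h, zero_div]

end Deformation

/-! ### The image of the collapse -/

theorem sum_extendZero {v : V} [Fintype ↥(G.closedNbhd v)ᶜ] (x : ↥(G.closedNbhd v)ᶜ → ℝ) :
    ∑ w, extendZero G v x w = ∑ w, x w := by
  classical
  rw [← Finset.sum_subset (Finset.subset_univ ((G.closedNbhd v)ᶜ).toFinset), ← Finset.sum_coe_sort]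
  · refine Fintype.sum_equiv (Equiv.subtypeEquivRight fun w => by simp) _ _ fun w => ?_
    exact extendZero_coe x ⟨w, _⟩
  · intro w _ hw
    exact extendZero_of_mem x (by simpa using hw)

theorem isIndepPoint_joinPoint [DecidableEq V] {v : V} [Fintype ↥(G.closedNbhd v)ᶜ]
    {x : ↥(G.closedNbhd v)ᶜ → ℝ}
    (hx : IsIndepPoint (G.induce (G.closedNbhd v)ᶜ) x) {t : ℝ} (ht : 0 ≤ t) (ht' : t ≤ 1) :
    IsIndepPoint G (joinPoint G v x t) := by
  have hnonneg : ∀ w, 0 ≤ extendZero G v x w := by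
    intro w
    unfold extendZero
    split_ifs
    exacts [hx.1 _, le_rfl]
  have hadj : ∀ w, G.Adj v w → joinPoint G v x t w = 0 := fun w hw => by
    rw [joinPoint_of_ne _ _ hw.ne', extendZero_of_mem x (mem_closedNbhd_of_adj hw), mul_zero]
  refine ⟨fun w => ?_, ?_, fun a b hab => ?_⟩
  · have h1 : 0 ≤ Pi.single (M := fun _ => ℝ) v 1 w :=
      (Pi.single_nonneg.2 zero_le_one : (0 : V → ℝ) ≤ Pi.single v 1) w
    exact add_nonneg (mul_nonneg (by linarith) h1) (mul_nonneg ht (hnonneg w))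
  · simp only [joinPoint, Finset.sum_add_distrib, ← Finset.mul_sum, sum_extendZero, hx.2.1]
    simp
  · by_cases hav : a = v
    · subst hav
      exact .inr (hadj b hab)
    by_cases hbv : b = v
    · subst hbv
      exact .inl (hadj a hab.symm)
    rw [joinPoint_of_ne _ _ hav, joinPoint_of_ne _ _ hbv]
    by_cases ha : a ∈ G.closedNbhd v
    · simp [extendZero_of_mem x ha]
    by_cases hb : b ∈ G.closedNbhd v
    · simp [extendZero_of_mem x hb]
    have := hx.2.2 ⟨a, ha⟩ ⟨b, hb⟩ hab
    rw [← extendZero_coe x, ← extendZero_coe x] at this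
    exact this.imp (fun h => by simp [h]) (fun h => by simp [h])

theorem starCollapse_eq_single {u : V} [DecidableEq (G.neighborSet u)]
    (hu : G.IsClique (G.neighborSet u)) {x : realization (indepFaces G)} (v : G.neighborSet u)
    (hv : x.1 v ≠ 0) : starCollapse G u x = Pi.single v (x.1 v • x.1) := by
  ext v' w
  by_cases h : v' = v
  · subst h
    simp [starCollapse_apply]
  · have hne : (v' : V) ≠ v := fun h' => h (Subtype.ext h')
    rw [starCollapse_apply, Pi.single_eq_of_ne h,
      (realization_isIndepPoint x).eq_zero_of_nbhd hu v.2 hv v'.2 hne, zero_mul, Pi.zero_apply]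

theorem eq_or_eq_zero_of_starCollapse_eq {u : V} {x y : realization (indepFaces G)}
    (h : starCollapse G u x = starCollapse G u y) :
    x = y ∨ ∀ v, G.Adj u v → x.1 v = 0 ∧ y.1 v = 0 := by
  have hval : ∀ v, G.Adj u v → x.1 v = y.1 v := fun v hv => by
    have := congrFun (congrFun h ⟨v, hv⟩) v
    simp only [starCollapse_apply] at this
    exact (mul_self_inj ((realization_isIndepPoint x).1 v) ((realization_isIndepPoint y).1 v)).1 this
  by_cases hx : ∀ v, G.Adj u v → x.1 v = 0
  · exact .inr fun v hv => ⟨hx v hv, hval v hv ▸ hx v hv⟩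
  · push Not at hx
    obtain ⟨v, hv, hxv⟩ := hx
    refine .inl (Subtype.ext (funext fun w => ?_))
    have := congrFun (congrFun h ⟨v, hv⟩) w
    simp only [starCollapse_apply, ← hval v hv] at this
    exact mul_left_cancel₀ hxv this

/-- A point of `Ind(G)` with `0 < f v < 1` lies on the segment from `v` to a point of
`Ind(G \ Ṅ(v))`. -/
theorem IsIndepPoint.exists_eq_joinPoint [DecidableEq V] {f : V → ℝ} (hf : IsIndepPoint G f)
    {v : V} [Fintype ↥(G.closedNbhd v)ᶜ] (hv : f v ≠ 0) (hv' : f v ≠ 1) :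
    ∃ x, IsIndepPoint (G.induce (G.closedNbhd v)ᶜ) x ∧ joinPoint G v x (1 - f v) = f := by
  have hpos : 0 < 1 - f v := sub_pos.2 ((hf.le_one v).lt_of_ne hv')
  let x : ↥(G.closedNbhd v)ᶜ → ℝ := fun w => f w / (1 - f v)
  have hx : joinPoint G v x (1 - f v) = f := by
    ext w
    by_cases hwv : w = v
    · subst hwv
      rw [joinPoint_self, sub_sub_cancel]
    rw [joinPoint_of_ne _ _ hwv]
    by_cases hw : w ∈ G.closedNbhd v
    · rw [extendZero_of_mem x hw, mul_zero,
        hf.eq_zero_of_adj ((Set.mem_insert_iff.1 hw).resolve_left hwv : G.Adj v w).symm hv]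
    · rw [extendZero_coe x ⟨w, hw⟩]
      exact mul_div_cancel₀ _ hpos.ne'
  refine ⟨x, ⟨fun w => div_nonneg (hf.1 w) hpos.le, ?_, fun a b hab => ?_⟩, hx⟩
  · have hsum := hf.2.1
    rw [← hx] at hsum
    simp only [joinPoint, Finset.sum_add_distrib, ← Finset.mul_sum, sum_extendZero] at hsum
    simp only [Finset.sum_pi_single', Finset.mem_univ, if_true, mul_one] at hsum
    refine mul_left_cancel₀ hpos.ne' ?_
    linarith
  · exact (hf.2.2 a b hab).imp (fun h => by simp [x, h]) (fun h => by simp [x, h])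

theorem IsIndepPoint.eq_single [DecidableEq V] {f : V → ℝ} (hf : IsIndepPoint G f) {v : V}
    (hv : f v = 1) : f = Pi.single v 1 := by
  ext w
  by_cases hw : w = v
  · subst hw
    rw [hv, Pi.single_eq_same]
  · rw [Pi.single_eq_of_ne hw]
    have hle : f v + f w ≤ ∑ a, f a := by
      rw [← Finset.sum_pair (Ne.symm hw)]
      exact Finset.sum_le_sum_of_subset_of_nonneg (Finset.subset_univ _) fun a _ _ => hf.1 a
    linarith [hf.1 w, hf.2.1]

theorem range_starCollapse [DecidableEq V] {u : V} [DecidableEq (G.neighborSet u)]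
    (hu : G.IsClique (G.neighborSet u)) :
    Set.range (starCollapse G u) = Set.range (Wedge.coord
      (fun v : G.neighborSet u => suspCoord G v.1) fun _ => suspCoord_north) := by
  classical
  have hsingle : ∀ (v : G.neighborSet u) (y), Wedge.coord
      (fun v : G.neighborSet u => suspCoord G v.1) (fun _ => suspCoord_north)
        (Quot.mk _ (Sum.inl ⟨v, y⟩)) = Pi.single v (suspCoord G v.1 y) := fun _ _ => rfl
  have hbase : Wedge.coord (fun v : G.neighborSet u => suspCoord G v.1)
    (fun _ => suspCoord_north) (Quot.mk _ (Sum.inr ())) = 0 := rfl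
  have hzero : starCollapse G u (indepPoint (Pi.single u 1) (isIndepPoint_single u)) = 0 :=
    starCollapse_eq_zero fun v hv => Pi.single_eq_of_ne hv.ne' _
  apply Set.Subset.antisymm
  · rintro _ ⟨f, rfl⟩
    have hf := realization_isIndepPoint f
    by_cases h : ∀ v, G.Adj u v → f.1 v = 0
    · exact ⟨_, hbase.trans (starCollapse_eq_zero h).symm⟩
    push Not at h
    obtain ⟨v, hv⟩ : ∃ v : G.neighborSet u, f.1 v ≠ 0 := h.elim fun v hv => ⟨⟨v, hv.1⟩, hv.2⟩
    rw [starCollapse_eq_single hu v hv]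
    by_cases hv' : f.1 v = 1
    · refine ⟨Quot.mk _ (Sum.inl ⟨v, Quot.mk _ (Sum.inr false)⟩), (hsingle v _).trans ?_⟩
      rw [suspCoord_south, hv', one_smul, hf.eq_single hv']
    · obtain ⟨x, hx, hxf⟩ := hf.exists_eq_joinPoint hv hv'
      refine ⟨Quot.mk _ (Sum.inl ⟨v, Quot.mk _ (Sum.inl (indepPoint x hx,
        ⟨1 - f.1 v, sub_nonneg.2 (hf.le_one v), sub_le_self _ (hf.1 v)⟩))⟩), (hsingle v _).trans ?_⟩
      rw [suspCoord_mk]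
      change Pi.single (M := fun _ => V → ℝ) v ((1 - (1 - f.1 v)) • joinPoint G v x (1 - f.1 v)) = _
      rw [hxf, sub_sub_cancel]
  · rintro _ ⟨⟨⟨v, y⟩ | ⟨⟩⟩, rfl⟩
    · rw [hsingle]
      obtain rfl | rfl | ⟨x, t, ht, ht', rfl⟩ := Susp.cases y
      · rw [suspCoord_north, Pi.single_zero]
        exact ⟨_, hzero⟩
      · refine ⟨indepPoint (Pi.single v.1 1) (isIndepPoint_single v.1), ?_⟩
        have h1 : (indepPoint (Pi.single v.1 1) (isIndepPoint_single (G := G) v.1)).1 v.1 = 1 :=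
          Pi.single_eq_same _ _
        rw [starCollapse_eq_single hu v (h1.trans_ne one_ne_zero), h1, one_smul, suspCoord_south]
        rfl
      · let f := indepPoint _
          (isIndepPoint_joinPoint (realization_isIndepPoint x) t.2.1 t.2.2)
        have h1 : f.1 v.1 = 1 - t := joinPoint_self _ _
        refine ⟨f, ?_⟩
        rw [starCollapse_eq_single hu v (h1.trans_ne (sub_ne_zero.2 ht'.ne')), h1, suspCoord_mk]
        rfl
    · exact ⟨_, hzero⟩

end Realization

/-- If `G[N(u)]` is complete then `Ind(G)` is homotopy equivalent to the
wedge over `v ∈ N(u)` of `susp(Ind(G \ Ṅ(v)))`. -/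
theorem indComplex_wedge_susp_of_complete_nbhd {V : Type*} [Fintype V]
    (G : SimpleGraph V) (u : V) (hu : G.induce (G.neighborSet u) = ⊤) :
    Nonempty (ContinuousMap.HomotopyEquiv (realization (indepFaces G))
      (Wedge (fun v : ↥(G.neighborSet u) =>
          Susp (realization (indepFaces (G.induce (G.closedNbhd v.1)ᶜ))))
        (fun v => Susp.north _))) := by
  classical
  have hu' : G.IsClique (G.neighborSet u) := SimpleGraph.induce_eq_top.1 hu
  refine nonempty_homotopyEquiv_of_range_eq (starCollapse G u)
    ⟨Wedge.coord (fun v : G.neighborSet u => suspCoord G v.1) fun _ => suspCoord_north,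
      Wedge.continuous_coord (fun _ => suspCoord_north) fun _ => continuous_suspCoord⟩
    (Wedge.coord_injective (fun _ => suspCoord_north) fun _ => suspCoord_injective)
    (range_starCollapse hu')
    (starHomotopy hu') (starHomotopy_zero hu') (fun x y h => ?_) (fun s x y h => ?_)
  · obtain rfl | h := eq_or_eq_zero_of_starCollapse_eq h
    · rfl
    · rw [starHomotopy_one hu' x fun v hv => (h v hv).1,
        starHomotopy_one hu' y fun v hv => (h v hv).2]
  · obtain rfl | h := eq_or_eq_zero_of_starCollapse_eq h
    · rfl
    · rw [starCollapse_eq_zero fun v hv => starHomotopy_eq_zero hu' s x hv (h v hv).1,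
        starCollapse_eq_zero fun v hv => starHomotopy_eq_zero hu' s y hv (h v hv).2]
end

section
/- Let G be a graph with vertices u, v such that N(u) = {v}, and suppose Ind(G \ Ṅ(v)) is (n−1)-connected. Then Ind(G) is n-connected. -/
open SimpleGraph

/-- Every continuous map from the unit sphere of `ℝᵏ` to the subset `S` extends to a continuous
map from the unit ball to `S`. -/
def SphereExtends {Z : Type*} [TopologicalSpace Z] (S : Set Z) (k : ℕ) : Prop :=
  ∀ f : EuclideanSpace ℝ (Fin k) → Z, ContinuousOn f (Metric.sphere 0 1) →
    Set.MapsTo f (Metric.sphere 0 1) S →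
    ∃ g : EuclideanSpace ℝ (Fin k) → Z, ContinuousOn g (Metric.closedBall 0 1) ∧
      Set.MapsTo g (Metric.closedBall 0 1) S ∧ Set.EqOn g f (Metric.sphere 0 1)

theorem exists_continuousOn_union {X Z : Type*} [TopologicalSpace X] [TopologicalSpace Z]
    {s t : Set X} (hs : IsClosed s) (ht : IsClosed t) {f g : X → Z} (hf : ContinuousOn f s)
    (hg : ContinuousOn g t) (hfg : Set.EqOn f g (s ∩ t)) :
    ∃ h : X → Z, ContinuousOn h (s ∪ t) ∧ Set.EqOn h f s ∧ Set.EqOn h g t := by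
  classical
  have h₁ : Set.EqOn (s.piecewise f g) f s := Set.piecewise_eqOn s f g
  have h₂ : Set.EqOn (s.piecewise f g) g t := by
    intro x hx
    by_cases hxs : x ∈ s
    · rw [h₁ hxs, hfg ⟨hxs, hx⟩]
    · exact Set.piecewise_eq_of_notMem s f g hxs
  exact ⟨s.piecewise f g, (hf.congr h₁).union_of_isClosed (hg.congr h₂) hs ht, h₁, h₂⟩

/-- A set that can be contracted within itself has the sphere extension property. -/
theorem SphereExtends.of_contraction {Z : Type*} [TopologicalSpace Z] {S : Set Z} {p : Z}
    (hp : p ∈ S) {H : Z × ℝ → Z} (hH : ContinuousOn H (S ×ˢ Set.Icc 0 1))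
    (hS : Set.MapsTo H (S ×ˢ Set.Icc 0 1) S) (h₀ : ∀ x ∈ S, H (x, 0) = x)
    (h₁ : ∀ x ∈ S, H (x, 1) = p) (k : ℕ) : SphereExtends S k := by
  intro f hf hfS
  let E := EuclideanSpace ℝ (Fin k)
  let s : Set E := Metric.closedBall 0 1 ∩ {z | 1 / 2 ≤ ‖z‖}
  let t : Set E := Metric.closedBall 0 (1 / 2)
  have hpos : ∀ z ∈ s, 0 < ‖z‖ := fun z hz ↦ lt_of_lt_of_le (by norm_num) hz.2
  have hsph : Set.MapsTo (fun z : E ↦ ‖z‖⁻¹ • z) s (Metric.sphere 0 1) := by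
    intro z hz
    simp [norm_smul, (hpos z hz).ne']
  let q : E → Z × ℝ := fun z ↦ (f (‖z‖⁻¹ • z), 2 * (1 - ‖z‖))
  have hqs : Set.MapsTo q s (S ×ˢ Set.Icc 0 1) := by
    intro z hz
    refine ⟨hfS (hsph hz), ?_⟩
    have h1 : ‖z‖ ≤ 1 := by simpa using hz.1
    have h2 : 1 / 2 ≤ ‖z‖ := hz.2
    constructor <;> dsimp only [q] <;> linarith
  have hq : ContinuousOn q s := by
    refine ContinuousOn.prodMk (hf.comp ?_ hsph) (by fun_prop)
    exact (continuousOn_id.norm.inv₀ fun z hz ↦ (hpos z hz).ne').smul continuousOn_id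
  obtain ⟨g, hg, hgs, hgt⟩ := exists_continuousOn_union (s := s) (t := t)
    (Metric.isClosed_closedBall.inter (isClosed_le continuous_const continuous_norm))
    Metric.isClosed_closedBall (hH.comp hq hqs) (continuousOn_const (c := p)) (by
      rintro z ⟨hzs, hzt⟩
      have h1 : ‖z‖ ≤ 1 / 2 := by simpa [t] using hzt
      have h2 : ‖z‖ = 1 / 2 := le_antisymm h1 hzs.2
      have h3 : 2 * (1 - ‖z‖) = 1 := by rw [h2]; norm_num
      simpa [q, h3] using h₁ _ (hfS (hsph hzs)))
  have hcover : Metric.closedBall 0 1 ⊆ s ∪ t := by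
    intro z hz
    rcases le_total (1 / 2) ‖z‖ with h | h
    · exact Or.inl ⟨hz, h⟩
    · exact Or.inr (by simpa [t] using h)
  refine ⟨g, hg.mono hcover, ?_, ?_⟩
  · intro z hz
    rcases hcover hz with h | h
    · rw [hgs h]; exact hS (hqs h)
    · rw [hgt h]; exact hp
  · intro z hz
    have h1 : ‖z‖ = 1 := by simpa using hz
    have hzs : z ∈ s := ⟨Metric.sphere_subset_closedBall hz, by
      show 1 / 2 ≤ ‖z‖
      rw [h1]; norm_num⟩
    rw [hgs hzs]
    simpa [q, h1] using h₀ _ (hfS hz)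

/-- The relative boundary of the box `Set.Icc a b`. -/
def boxBoundary {m : ℕ} (a b : Fin m → ℝ) : Set (Fin m → ℝ) :=
  {y ∈ Set.Icc a b | ∃ j, a j ≠ b j ∧ (y j = a j ∨ y j = b j)}

theorem boxBoundary_subset {m : ℕ} (a b : Fin m → ℝ) : boxBoundary a b ⊆ Set.Icc a b :=
  fun _ hy ↦ hy.1

theorem isClosed_boxBoundary {m : ℕ} (a b : Fin m → ℝ) : IsClosed (boxBoundary a b) := by
  have h : boxBoundary a b = Set.Icc a b ∩ ⋃ j ∈ {j | a j ≠ b j}, {y | y j = a j ∨ y j = b j} := by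
    ext y
    simp [boxBoundary]
  rw [h]
  refine isClosed_Icc.inter ((Set.toFinite _).isClosed_biUnion fun j _ ↦ ?_)
  exact (isClosed_eq (continuous_apply j) continuous_const).union
    (isClosed_eq (continuous_apply j) continuous_const)

theorem exists_homeomorph_box {k : ℕ} {a b : Fin k → ℝ} (hab : ∀ j, a j < b j) :
    ∃ e : EuclideanSpace ℝ (Fin k) ≃ₜ (Fin k → ℝ),
      e '' Metric.closedBall 0 1 = Set.Icc a b ∧ e '' Metric.sphere 0 1 = boxBoundary a b := by
  let L := EuclideanSpace.equiv (Fin k) ℝ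
  have hinterior : interior (L ⁻¹' Set.Icc a b) = L ⁻¹' Set.univ.pi fun j ↦ Set.Ioo (a j) (b j) := by
    refine (L.toHomeomorph.preimage_interior (Set.Icc a b)).symm.trans ?_
    rw [← Set.pi_univ_Icc, interior_pi_set Set.finite_univ]
    simp
  have hclosed : IsClosed (L ⁻¹' Set.Icc a b) := isClosed_Icc.preimage L.continuous
  obtain ⟨e, -, hc, hf⟩ :=
    exists_homeomorph_image_interior_closure_frontier_eq_unitBall (s := L ⁻¹' Set.Icc a b)
      ((convex_Icc a b).linear_preimage L.toLinearEquiv.toLinearMap)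
      (by
        rw [hinterior]
        refine ⟨L.symm fun j ↦ (a j + b j) / 2, fun j _ ↦ ?_⟩
        have := hab j
        simp only [ContinuousLinearEquiv.apply_symm_apply, Set.mem_Ioo]
        constructor <;> linarith)
      (L.toHomeomorph.isClosedEmbedding.isCompact_preimage isCompact_Icc).isBounded
  refine ⟨e.symm.trans L.toHomeomorph, ?_, ?_⟩
  · rw [← hc, hclosed.closure_eq, Set.image_image]
    simp only [Homeomorph.trans_apply, Homeomorph.symm_apply_apply]
    exact Set.image_preimage_eq _ L.surjective
  · rw [← hf, hclosed.frontier_eq, hinterior, Set.image_image]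
    simp only [Homeomorph.trans_apply, Homeomorph.symm_apply_apply]
    rw [← Set.preimage_sdiff]
    refine (Set.image_preimage_eq _ L.surjective).trans ?_
    ext y
    simp only [Set.mem_sdiff, Set.mem_pi, Set.mem_univ, true_implies, boxBoundary, Set.mem_ofPred_eq,
      not_forall]
    refine and_congr_right fun hy ↦ exists_congr fun j ↦ ?_
    have h1 := hy.1 j
    have h2 := hy.2 j
    simp only [Set.mem_Ioo, (hab j).ne, ne_eq, not_false_eq_true, true_and]
    grind

theorem SphereExtends.exists_extension_box {Z : Type*} [TopologicalSpace Z] {S : Set Z} {m : ℕ}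
    {a b : Fin m → ℝ} (hab : a ≤ b)
    (h : SphereExtends S (Finset.univ.filter fun j ↦ a j ≠ b j).card) {f : (Fin m → ℝ) → Z}
    (hf : ContinuousOn f (boxBoundary a b)) (hfS : Set.MapsTo f (boxBoundary a b) S) :
    ∃ g : (Fin m → ℝ) → Z, ContinuousOn g (Set.Icc a b) ∧ Set.MapsTo g (Set.Icc a b) S ∧
      Set.EqOn g f (boxBoundary a b) := by
  set J := Finset.univ.filter fun j ↦ a j ≠ b j with hJ
  have hJm : ∀ {j}, j ∈ J ↔ a j ≠ b j := by simp [hJ]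
  let σ : J ≃ Fin J.card := J.equivFin
  obtain ⟨e, heb, hes⟩ := exists_homeomorph_box (a := fun i ↦ a (σ.symm i))
    (b := fun i ↦ b (σ.symm i))
    fun i ↦ lt_of_le_of_ne (hab _) (hJm.1 (σ.symm i).2)
  let r : (Fin m → ℝ) → Fin J.card → ℝ := fun y i ↦ y (σ.symm i)
  let c : (Fin J.card → ℝ) → Fin m → ℝ := fun z j ↦ if hj : j ∈ J then z (σ ⟨j, hj⟩) else a j
  have hr : Continuous r := by fun_prop
  have hc : Continuous c := by
    refine continuous_pi fun j ↦ ?_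
    by_cases hj : j ∈ J
    · simpa [c, hj] using continuous_apply _
    · simpa [c, hj] using continuous_const
  have hrc : ∀ z, r (c z) = z := fun z ↦ by ext i; simp [r, c]
  have hcr : ∀ y ∈ Set.Icc a b, c (r y) = y := by
    intro y hy
    ext j
    by_cases hj : j ∈ J
    · simp [c, r, hj]
    · have h1 : a j = b j := by simpa [hJm] using hj
      have h2 := hy.1 j
      have h3 := hy.2 j
      simp only [c, hj, dite_false]
      linarith
  have hrb : Set.MapsTo r (Set.Icc a b) (Set.Icc (fun i ↦ a (σ.symm i)) fun i ↦ b (σ.symm i)) :=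
    fun y hy ↦ ⟨fun i ↦ hy.1 _, fun i ↦ hy.2 _⟩
  have hrs : Set.MapsTo r (boxBoundary a b)
      (boxBoundary (fun i ↦ a (σ.symm i)) fun i ↦ b (σ.symm i)) := by
    rintro y ⟨hy, j, hj, hyj⟩
    refine ⟨hrb hy, σ ⟨j, hJm.2 hj⟩, ?_⟩
    simpa [r] using ⟨hj, hyj⟩
  have hcs : Set.MapsTo c (boxBoundary (fun i ↦ a (σ.symm i)) fun i ↦ b (σ.symm i))
      (boxBoundary a b) := by
    rintro z ⟨⟨hz1, hz2⟩, i, hi, hzi⟩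
    refine ⟨⟨fun j ↦ ?_, fun j ↦ ?_⟩, σ.symm i, hi, by simpa [c] using hzi⟩
    · by_cases hj : j ∈ J
      · simpa [c, hj] using hz1 (σ ⟨j, hj⟩)
      · simp [c, hj]
    · by_cases hj : j ∈ J
      · simpa [c, hj] using hz2 (σ ⟨j, hj⟩)
      · simpa [c, hj] using hab j
  have hes' : Set.MapsTo e (Metric.sphere 0 1)
      (boxBoundary (fun i ↦ a (σ.symm i)) fun i ↦ b (σ.symm i)) := by
    rw [← hes]; exact Set.mapsTo_image _ _
  have hsym : ∀ {s : Set (EuclideanSpace ℝ (Fin J.card))} {t}, e '' s = t →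
      Set.MapsTo e.symm t s := by
    rintro s _ rfl _ ⟨z, hz, rfl⟩
    simpa using hz
  obtain ⟨g, hg, hgS, hgf⟩ := h (fun z ↦ f (c (e z)))
    (hf.comp (hc.comp e.continuous).continuousOn (hcs.comp hes')) (hfS.comp (hcs.comp hes'))
  have hball : Set.MapsTo (fun y ↦ e.symm (r y)) (Set.Icc a b) (Metric.closedBall 0 1) :=
    (hsym heb).comp hrb
  refine ⟨fun y ↦ g (e.symm (r y)),
    hg.comp (e.symm.continuous.comp hr).continuousOn hball, hgS.comp hball, fun y hy ↦ ?_⟩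
  have h1 : e.symm (r y) ∈ Metric.sphere 0 1 := hsym hes (hrs hy)
  simp only [hgf h1, Homeomorph.apply_symm_apply, hcr y hy.1]

/-- The least vertex of the smallest face of the cubical grid on `ℝᵐ` containing `x`. -/
noncomputable def lowerVertex {m : ℕ} (x : Fin m → ℝ) : Fin m → ℝ := fun j ↦ (⌊x j⌋ : ℝ)

/-- The greatest vertex of the smallest face of the cubical grid on `ℝᵐ` containing `x`. -/
noncomputable def upperVertex {m : ℕ} (x : Fin m → ℝ) : Fin m → ℝ := fun j ↦ (⌈x j⌉ : ℝ)

/-- The smallest face of the cubical grid on `ℝᵐ` containing `x`. -/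
def gridFace {m : ℕ} (x : Fin m → ℝ) : Set (Fin m → ℝ) :=
  Set.Icc (lowerVertex x) (upperVertex x)

/-- The dimension of the smallest face of the cubical grid on `ℝᵐ` containing `x`. -/
noncomputable def gridDim {m : ℕ} (x : Fin m → ℝ) : ℕ :=
  (Finset.univ.filter fun j ↦ lowerVertex x j ≠ upperVertex x j).card

/-- A union of faces of the cubical grid on `ℝᵐ`. -/
def IsCubical {m : ℕ} (T : Set (Fin m → ℝ)) : Prop := ∀ x ∈ T, gridFace x ⊆ T

theorem IsCubical.union {m : ℕ} {T W : Set (Fin m → ℝ)} (hT : IsCubical T) (hW : IsCubical W) :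
    IsCubical (T ∪ W) := fun x hx ↦
  hx.elim (fun h ↦ (hT x h).trans Set.subset_union_left)
    fun h ↦ (hW x h).trans Set.subset_union_right

theorem IsCubical.inter {m : ℕ} {T W : Set (Fin m → ℝ)} (hT : IsCubical T) (hW : IsCubical W) :
    IsCubical (T ∩ W) := fun x hx ↦ Set.subset_inter (hT x hx.1) (hW x hx.2)

theorem mem_gridFace_self {m : ℕ} (x : Fin m → ℝ) : x ∈ gridFace x :=
  ⟨fun j ↦ Int.floor_le (x j), fun j ↦ Int.le_ceil (x j)⟩

theorem lowerVertex_le_upperVertex {m : ℕ} (x : Fin m → ℝ) : lowerVertex x ≤ upperVertex x :=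
  (mem_gridFace_self x).1.trans (mem_gridFace_self x).2

theorem isCubical_Icc {m : ℕ} (c d : Fin m → ℤ) :
    IsCubical (Set.Icc (fun j ↦ (c j : ℝ)) fun j ↦ (d j : ℝ)) := by
  rintro x ⟨hx1, hx2⟩
  refine Set.Icc_subset_Icc (fun j ↦ ?_) fun j ↦ ?_
  · exact Int.cast_le.2 (Int.le_floor.2 (hx1 j))
  · exact Int.cast_le.2 (Int.ceil_le.2 (hx2 j))

theorem isCubical_gridFace {m : ℕ} (x : Fin m → ℝ) : IsCubical (gridFace x) :=
  isCubical_Icc (fun j ↦ ⌊x j⌋) fun j ↦ ⌈x j⌉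

theorem isCubical_boxBoundary {m : ℕ} (c d : Fin m → ℤ) :
    IsCubical (boxBoundary (fun j ↦ (c j : ℝ)) fun j ↦ (d j : ℝ)) := by
  rintro x ⟨hx, j, hj, hxj⟩ y hy
  refine ⟨isCubical_Icc c d x hx hy, j, hj, ?_⟩
  have h1 : (⌊x j⌋ : ℝ) ≤ y j := hy.1 j
  have h2 : y j ≤ (⌈x j⌉ : ℝ) := hy.2 j
  rcases hxj with h | h
  · left
    rw [h, Int.floor_intCast] at h1
    rw [h, Int.ceil_intCast] at h2
    exact le_antisymm h2 h1
  · right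
    rw [h, Int.floor_intCast] at h1
    rw [h, Int.ceil_intCast] at h2
    exact le_antisymm h2 h1

theorem vertices_eq_of_notMem_boxBoundary {m : ℕ} {x y : Fin m → ℝ} (hy : y ∈ gridFace x)
    (hyb : y ∉ boxBoundary (lowerVertex x) (upperVertex x)) (j : Fin m) :
    ⌊y j⌋ = ⌊x j⌋ ∧ ⌈y j⌉ = ⌈x j⌉ := by
  have h1 : (⌊x j⌋ : ℝ) ≤ y j := hy.1 j
  have h2 : y j ≤ (⌈x j⌉ : ℝ) := hy.2 j
  by_cases hj : (⌊x j⌋ : ℝ) = ⌈x j⌉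
  · have h3 : y j = ⌊x j⌋ := le_antisymm (hj ▸ h2) h1
    have h4 : y j = ⌈x j⌉ := h3.trans hj
    exact ⟨by rw [h3, Int.floor_intCast], by rw [h4, Int.ceil_intCast]⟩
  · have h3 : ¬ (y j = ⌊x j⌋ ∨ y j = ⌈x j⌉) := fun h ↦ hyb ⟨hy, j, hj, h⟩
    rw [not_or] at h3
    have h4 : (⌊x j⌋ : ℝ) < y j := lt_of_le_of_ne h1 (Ne.symm h3.1)
    have h5 : y j < ⌈x j⌉ := lt_of_le_of_ne h2 h3.2
    have h6 : (⌈x j⌉ : ℝ) ≤ ⌊x j⌋ + 1 := by exact_mod_cast Int.ceil_le_floor_add_one (x j)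
    refine ⟨Int.floor_eq_iff.2 ⟨h1, by linarith⟩, Int.ceil_eq_iff.2 ⟨by linarith, h2⟩⟩

theorem gridDim_lt_of_mem_boxBoundary {m : ℕ} {x y : Fin m → ℝ}
    (hy : y ∈ boxBoundary (lowerVertex x) (upperVertex x)) : gridDim y < gridDim x := by
  obtain ⟨hy, j, hj, hyj⟩ := hy
  have hmem : ∀ (z : Fin m → ℝ) i, i ∈ (Finset.univ.filter fun i ↦
      lowerVertex z i ≠ upperVertex z i) ↔ (⌊z i⌋ : ℝ) ≠ ⌈z i⌉ := by
    simp [lowerVertex, upperVertex]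
  refine Finset.card_lt_card ((Finset.ssubset_iff_of_subset fun i hi ↦ ?_).2
    ⟨j, (hmem x j).2 hj, ?_⟩)
  · rw [hmem] at hi ⊢
    contrapose! hi
    have h1 : (⌊x i⌋ : ℝ) ≤ y i := hy.1 i
    have h2 : y i ≤ (⌈x i⌉ : ℝ) := hy.2 i
    have h3 : y i = ⌊x i⌋ := le_antisymm (hi ▸ h2) h1
    rw [h3]; simp
  · rw [hmem, not_not]
    rcases hyj with h | h <;> rw [h] <;> simp [lowerVertex, upperVertex]

/-- A map from a cubical set `W` to a set into which spheres of low dimension extend to balls can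
be extended to a larger cubical set, provided the added faces have low dimension. -/
theorem exists_extension_cubical {Z : Type*} [TopologicalSpace Z] {S : Set Z} {m d : ℕ}
    (hS : ∀ k < d, SphereExtends S k) {c e : Fin m → ℤ} {W T : Set (Fin m → ℝ)}
    (hWT : W ⊆ T) (hTb : T ⊆ Set.Icc (fun j ↦ (c j : ℝ)) fun j ↦ (e j : ℝ))
    (hW : IsClosed W) (hWc : IsCubical W) (hTc : IsCubical T)
    (hd : ∀ x ∈ T, x ∉ W → gridDim x < d) {f : (Fin m → ℝ) → Z} (hf : ContinuousOn f W)
    (hfS : Set.MapsTo f W S) :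
    ∃ g : (Fin m → ℝ) → Z, ContinuousOn g T ∧ Set.MapsTo g T S ∧ Set.EqOn g f W := by
  let q : (Fin m → ℝ) → (Fin m → ℤ) × (Fin m → ℤ) := fun x ↦ (fun j ↦ ⌊x j⌋, fun j ↦ ⌈x j⌉)
  have hfin : (q '' T).Finite := by
    refine ((Set.finite_Icc c e).prod (Set.finite_Icc c e)).subset ?_
    rintro _ ⟨x, hx, rfl⟩
    obtain ⟨h1, h2⟩ := hTb hx
    have h3 : ∀ j, c j ≤ ⌊x j⌋ := fun j ↦ Int.le_floor.2 (h1 j)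
    have h4 : ∀ j, ⌈x j⌉ ≤ e j := fun j ↦ Int.ceil_le.2 (h2 j)
    have h5 : ∀ j, ⌊x j⌋ ≤ ⌈x j⌉ := fun j ↦ Int.floor_le_ceil _
    exact ⟨⟨h3, fun j ↦ (h5 j).trans (h4 j)⟩, fun j ↦ (h3 j).trans (h5 j), h4⟩
  induction hn : (q '' (T \ W)).ncard using Nat.strong_induction_on generalizing W f with
  | _ n ih =>
  by_cases hne : (T \ W).Nonempty
  swap
  · have hTW : T = W := (Set.sdiff_eq_empty.1 (Set.not_nonempty_iff_eq_empty.1 hne)).antisymm hWT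
    exact ⟨f, hTW ▸ hf, hTW ▸ hfS, fun _ _ ↦ rfl⟩
  obtain ⟨x, ⟨hxT, hxW⟩, hmin⟩ := (measure (gridDim (m := m))).wf.has_min _ hne
  have hbW : boxBoundary (lowerVertex x) (upperVertex x) ⊆ W := by
    intro y hy
    by_contra hyW
    exact hmin y ⟨hTc x hxT hy.1, hyW⟩ (gridDim_lt_of_mem_boxBoundary hy)
  have hqx : ∀ y ∈ gridFace x, y ∉ boxBoundary (lowerVertex x) (upperVertex x) → q y = q x := by
    intro y hy hyb
    have h1 := vertices_eq_of_notMem_boxBoundary hy hyb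
    exact Prod.ext (funext fun j ↦ (h1 j).1) (funext fun j ↦ (h1 j).2)
  have hqW : ∀ y ∈ W, q y ≠ q x := by
    intro y hy hyx
    refine hxW (hWc y hy ?_)
    have h1 : gridFace y = gridFace x := by
      have h2 := congrArg Prod.fst hyx
      have h3 := congrArg Prod.snd hyx
      have h4 : lowerVertex y = lowerVertex x :=
        funext fun j ↦ congrArg (Int.cast : ℤ → ℝ) (congrFun h2 j)
      have h5 : upperVertex y = upperVertex x :=
        funext fun j ↦ congrArg (Int.cast : ℤ → ℝ) (congrFun h3 j)
      rw [gridFace, gridFace, h4, h5]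
    rw [h1]
    exact mem_gridFace_self x
  obtain ⟨g, hg, hgS, hgf⟩ := (hS (gridDim x) (hd x hxT hxW)).exists_extension_box
    (lowerVertex_le_upperVertex x) (hf.mono hbW) (hfS.mono_left hbW)
  obtain ⟨h, hh, hhf, hhg⟩ := exists_continuousOn_union hW isClosed_Icc hf hg (by
    rintro y ⟨hyW, hy⟩
    by_cases hyb : y ∈ boxBoundary (lowerVertex x) (upperVertex x)
    · exact (hgf hyb).symm
    · exact absurd (hqx y hy hyb) (hqW y hyW))
  have hlt : (q '' (T \ (W ∪ gridFace x))).ncard < n := by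
    rw [← hn]
    refine Set.ncard_lt_ncard ?_ (hfin.subset (Set.image_mono Set.sdiff_subset))
    refine (Set.ssubset_iff_of_subset (Set.image_mono
      (Set.sdiff_subset_sdiff_right Set.subset_union_left))).2
      ⟨q x, ⟨x, ⟨hxT, hxW⟩, rfl⟩, ?_⟩
    rintro ⟨y, ⟨hyT, hyW⟩, hyx⟩
    refine hyW (Or.inr ?_)
    have h2 := congrArg Prod.fst hyx
    have h3 := congrArg Prod.snd hyx
    refine ⟨fun j ↦ ?_, fun j ↦ ?_⟩
    · have h4 : ⌊y j⌋ = ⌊x j⌋ := congrFun h2 j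
      simpa [lowerVertex, ← h4] using Int.floor_le (y j)
    · have h4 : ⌈y j⌉ = ⌈x j⌉ := congrFun h3 j
      simpa [upperVertex, ← h4] using Int.le_ceil (y j)
  obtain ⟨g', hg', hgS', hgf'⟩ := ih _ hlt (W := W ∪ gridFace x) (f := h)
    (Set.union_subset hWT (hTc x hxT)) (hW.union isClosed_Icc)
    (hWc.union (isCubical_gridFace x)) (fun y hy hyW ↦ hd y hy fun h ↦ hyW (Or.inl h)) hh
    (by
      rintro y (hy | hy)
      · rw [hhf hy]; exact hfS hy
      · rw [hhg hy]; exact hgS hy)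
    rfl
  exact ⟨g', hg', hgS', fun y hy ↦ (hgf' (Or.inl hy)).trans (hhf hy)⟩

theorem gridDim_lt_of_int {m : ℕ} {y : Fin m → ℝ} {j : Fin m} {c : ℤ} (h : y j = c) :
    gridDim y < m := by
  have hj : j ∉ Finset.univ.filter fun i ↦ lowerVertex y i ≠ upperVertex y i := by
    simp [lowerVertex, upperVertex, h]
  exact (Finset.card_lt_univ_of_notMem hj).trans_eq (Fintype.card_fin m)

/-- The top-dimensional face of the cubical grid on `ℝᵐ` with least vertex `c`. -/
def gridCell {m : ℕ} (c : Fin m → ℤ) : Set (Fin m → ℝ) :=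
  Set.Icc (fun j ↦ (c j : ℝ)) fun j ↦ ((c j + 1 : ℤ) : ℝ)

theorem gridDim_lt_of_mem_gridCell {m : ℕ} {c c' : Fin m → ℤ} (h : c ≠ c') {y : Fin m → ℝ}
    (hy : y ∈ gridCell c) (hy' : y ∈ gridCell c') : gridDim y < m := by
  obtain ⟨j, hj⟩ := Function.ne_iff.1 h
  rcases lt_or_gt_of_ne hj with h | h
  · exact gridDim_lt_of_int (j := j) (c := c' j)
      (le_antisymm ((hy.2 j).trans (Int.cast_le.2 h)) (hy'.1 j))
  · exact gridDim_lt_of_int (j := j) (c := c j)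
      (le_antisymm ((hy'.2 j).trans (Int.cast_le.2 h)) (hy.1 j))

theorem isClosed_biUnion_gridCell {m : ℕ} {I : Set (Fin m → ℤ)} (hI : I.Finite) :
    IsClosed (⋃ c ∈ I, gridCell c) :=
  hI.isClosed_biUnion fun _ _ ↦ isClosed_Icc

theorem isCubical_biUnion_gridCell {m : ℕ} (I : Set (Fin m → ℤ)) :
    IsCubical (⋃ c ∈ I, gridCell c) := by
  intro x hx
  obtain ⟨c, hc, hxc⟩ := Set.mem_iUnion₂.1 hx
  exact (isCubical_Icc _ _ x hxc).trans (Set.subset_biUnion_of_mem (u := gridCell) hc)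

theorem exists_mem_gridCell {m : ℕ} {N : ℤ} {y : Fin m → ℝ}
    (hy : y ∈ Set.Icc (fun _ ↦ ((0 : ℤ) : ℝ)) fun _ ↦ (N : ℝ)) (hN : 0 < N) :
    ∃ c ∈ Set.Icc (0 : Fin m → ℤ) fun _ ↦ N - 1, y ∈ gridCell c := by
  refine ⟨fun j ↦ min ⌊y j⌋ (N - 1), ⟨fun j ↦ ?_, fun j ↦ min_le_right _ _⟩, fun j ↦ ?_,
    fun j ↦ ?_⟩
  · have h : 0 ≤ ⌊y j⌋ := Int.le_floor.2 (hy.1 j)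
    show 0 ≤ min ⌊y j⌋ (N - 1)
    omega
  · exact (Int.cast_le.2 (min_le_left _ _)).trans (Int.floor_le _)
  · rcases le_total ⌊y j⌋ (N - 1) with h | h
    · simpa [min_eq_left h] using (Int.lt_floor_add_one (y j)).le
    · simpa [min_eq_right h] using hy.2 j

theorem gridCell_subset {m : ℕ} {N : ℤ} {c : Fin m → ℤ}
    (hc : c ∈ Set.Icc (0 : Fin m → ℤ) fun _ ↦ N - 1) :
    gridCell c ⊆ Set.Icc (fun _ ↦ ((0 : ℤ) : ℝ)) fun _ ↦ (N : ℝ) := by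
  refine Set.Icc_subset_Icc (fun j ↦ Int.cast_le.2 (hc.1 j)) fun j ↦ Int.cast_le.2 ?_
  have h : c j ≤ N - 1 := hc.2 j
  omega

theorem exists_continuous_extension_unitInterval {E : Type*} [TopologicalSpace E] [NormalSpace E]
    {s : Set E} (hs : IsClosed s) {φ : E → ℝ} (hφ : ContinuousOn φ s)
    (hφs : Set.MapsTo φ s (Set.Icc 0 1)) :
    ∃ t : E → ℝ, Continuous t ∧ (∀ z, t z ∈ Set.Icc (0 : ℝ) 1) ∧ Set.EqOn t φ s := by
  let φ' : C(s, unitInterval) := ⟨hφs.restrict, hφ.mapsToRestrict hφs⟩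
  obtain ⟨t, ht⟩ := φ'.exists_restrict_eq hs
  exact ⟨fun z ↦ t z, by fun_prop, fun z ↦ (t z).2,
    fun z hz ↦ congrArg Subtype.val (DFunLike.congr_fun ht ⟨z, hz⟩)⟩

/-- A cell of a sufficiently fine grid cannot meet both level sets `{θ = 0}` and `{θ = 1}`. -/
theorem exists_grid_lt_one_or_pos {m : ℕ} {θ : (Fin m → ℝ) → ℝ} (hθ : Continuous θ) :
    ∃ N : ℤ, 0 < N ∧ ∀ c ∈ Set.Icc (0 : Fin m → ℤ) (fun _ ↦ N - 1),
      (∀ y ∈ gridCell c, θ ((N : ℝ)⁻¹ • y) < 1) ∨ ∀ y ∈ gridCell c, 0 < θ ((N : ℝ)⁻¹ • y) := by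
  have hu : UniformContinuousOn θ (Set.Icc 0 1) :=
    isCompact_Icc.uniformContinuousOn_of_continuous hθ.continuousOn
  obtain ⟨δ, hδ, hθδ⟩ := Metric.uniformContinuousOn_iff.1 hu 1 one_pos
  obtain ⟨n, hn⟩ := exists_nat_one_div_lt hδ
  let N : ℤ := n + 1
  have hN : (0 : ℝ) < N := by positivity
  have hNδ : (N : ℝ)⁻¹ < δ := by simpa [N] using hn
  refine ⟨N, by positivity, fun c hc ↦ ?_⟩
  have hmem : ∀ y ∈ gridCell c, (N : ℝ)⁻¹ • y ∈ Set.Icc (0 : Fin m → ℝ) 1 := by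
    intro y hy
    obtain ⟨h1, h2⟩ := gridCell_subset hc hy
    refine ⟨fun j ↦ ?_, fun j ↦ ?_⟩
    · have h3 : 0 ≤ y j := by simpa using h1 j
      simpa using mul_nonneg (inv_nonneg.2 hN.le) h3
    · have h3 : y j ≤ N := h2 j
      simpa using (inv_mul_le_one₀ hN).2 h3
  by_contra! hcon
  obtain ⟨⟨y, hy, hy1⟩, z, hz, hz0⟩ := hcon
  have hdist : dist y z ≤ 1 := by
    refine (dist_pi_le_iff zero_le_one).2 fun j ↦ ?_
    have h1 := hy.1 j
    have h2 := hy.2 j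
    have h3 := hz.1 j
    have h4 := hz.2 j
    push_cast at h2 h4
    rw [Real.dist_eq, abs_le]
    constructor <;> linarith
  have h := hθδ _ (hmem y hy) _ (hmem z hz) (by
    rw [dist_smul₀, Real.norm_of_nonneg (inv_nonneg.2 hN.le)]
    exact (mul_le_of_le_one_right (inv_nonneg.2 hN.le) hdist).trans_lt hNδ)
  rw [Real.dist_eq, abs_lt] at h
  linarith [h.2]

/-- Suppose that `X` is covered by the open subsets `{τ < 1}` and `{0 < τ}` into which all spheres
extend to balls, and that their intersection is a product of `Set.Ioo 0 1` with `L`, where `τ` is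
the first projection. If all spheres of dimension less than `m - 1` in `L` extend to balls, then so
do all spheres of dimension `m - 1` in `X`. -/
theorem SphereExtends.of_cover {Z Z' : Type*} [TopologicalSpace Z] [TopologicalSpace Z']
    {X : Set Z} {L : Set Z'} {τ : Z → ℝ} (hτ : Continuous τ) (hτX : Set.MapsTo τ X (Set.Icc 0 1))
    {ρ : Z → Z'} (hρ : ContinuousOn ρ (X ∩ τ ⁻¹' Set.Ioo 0 1))
    (hρL : Set.MapsTo ρ (X ∩ τ ⁻¹' Set.Ioo 0 1) L) {J : ℝ × Z' → Z} (hJ : Continuous J)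
    (hJX : ∀ t ∈ Set.Ioo (0 : ℝ) 1, ∀ l ∈ L, J (t, l) ∈ X)
    (hτJ : ∀ t ∈ Set.Ioo (0 : ℝ) 1, ∀ l ∈ L, τ (J (t, l)) = t)
    (hJρ : ∀ x ∈ X ∩ τ ⁻¹' Set.Ioo 0 1, J (τ x, ρ x) = x)
    (hA : ∀ k, SphereExtends (X ∩ {x | τ x < 1}) k)
    (hB : ∀ k, SphereExtends (X ∩ {x | 0 < τ x}) k) {m : ℕ} (hL : ∀ k < m, SphereExtends L k) :
    SphereExtends X m := by
  intro f hf hfX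
  obtain ⟨e, heb, hes⟩ := exists_homeomorph_box (k := m) (a := 0) (b := 1) fun _ ↦ by simp
  obtain ⟨t, ht, htI, htf⟩ := exists_continuous_extension_unitInterval
    Metric.isClosed_sphere (hτ.comp_continuousOn hf) (hτX.comp hfX)
  obtain ⟨N, hN, hcell⟩ := exists_grid_lt_one_or_pos (ht.comp e.symm.continuous)
  have hNR : (0 : ℝ) < N := Int.cast_pos.2 hN
  let D : Set (Fin m → ℝ) := Set.Icc (fun _ ↦ ((0 : ℤ) : ℝ)) fun _ ↦ (N : ℝ)
  let B : Set (Fin m → ℝ) := boxBoundary (fun _ ↦ ((0 : ℤ) : ℝ)) fun _ ↦ (N : ℝ)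
  let φ : (Fin m → ℝ) → EuclideanSpace ℝ (Fin m) := fun y ↦ e.symm ((N : ℝ)⁻¹ • y)
  have hφ : Continuous φ := by fun_prop
  have hφB : Set.MapsTo φ B (Metric.sphere 0 1) := by
    rintro y ⟨⟨hy1, hy2⟩, j, -, hj⟩
    have hmem : (N : ℝ)⁻¹ • y ∈ boxBoundary (0 : Fin m → ℝ) 1 := by
      refine ⟨⟨fun i ↦ ?_, fun i ↦ ?_⟩, j, by simp, ?_⟩
      · have h3 : 0 ≤ y i := by simpa using hy1 i
        simpa using mul_nonneg (inv_nonneg.2 hNR.le) h3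
      · have h3 : y i ≤ N := hy2 i
        simpa using (inv_mul_le_one₀ hNR).2 h3
      · rcases hj with h | h
        · left; simp [h]
        · right; simp [h, hNR.ne']
    rw [← hes] at hmem
    obtain ⟨z, hz, hzy⟩ := hmem
    simpa [φ, ← hzy] using hz
  let F : (Fin m → ℝ) → Z := fun y ↦ f (φ y)
  have hF : ContinuousOn F B := hf.comp hφ.continuousOn hφB
  have hFX : Set.MapsTo F B X := hfX.comp hφB
  let θ : (Fin m → ℝ) → ℝ := fun y ↦ t (φ y)
  have hθ : Continuous θ := ht.comp hφ
  have hθF : ∀ y ∈ B, τ (F y) = θ y := fun y hy ↦ (htf (hφB hy)).symm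
  let I : Set (Fin m → ℤ) := Set.Icc 0 fun _ ↦ N - 1
  let PI : Set (Fin m → ℤ) := {c ∈ I | ∀ y ∈ gridCell c, θ y < 1}
  let QI : Set (Fin m → ℤ) := {c ∈ I | ¬ ∀ y ∈ gridCell c, θ y < 1}
  let P : Set (Fin m → ℝ) := ⋃ c ∈ PI, gridCell c
  let Q : Set (Fin m → ℝ) := ⋃ c ∈ QI, gridCell c
  have hPcl : IsClosed P := isClosed_biUnion_gridCell ((Set.finite_Icc _ _).subset fun _ h ↦ h.1)
  have hQcl : IsClosed Q := isClosed_biUnion_gridCell ((Set.finite_Icc _ _).subset fun _ h ↦ h.1)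
  have hPc : IsCubical P := isCubical_biUnion_gridCell _
  have hQc : IsCubical Q := isCubical_biUnion_gridCell _
  have hBcl : IsClosed B := isClosed_boxBoundary _ _
  have hBc : IsCubical B := isCubical_boxBoundary _ _
  have hPD : P ⊆ D := Set.iUnion₂_subset fun c hc ↦ gridCell_subset hc.1
  have hQD : Q ⊆ D := Set.iUnion₂_subset fun c hc ↦ gridCell_subset hc.1
  have hDPQ : D ⊆ P ∪ Q := by
    intro y hy
    obtain ⟨c, hc, hyc⟩ := exists_mem_gridCell hy hN
    by_cases h : ∀ y ∈ gridCell c, θ y < 1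
    · exact Or.inl (Set.mem_biUnion (show c ∈ PI from ⟨hc, h⟩) hyc)
    · exact Or.inr (Set.mem_biUnion (show c ∈ QI from ⟨hc, h⟩) hyc)
  have hPθ : ∀ y ∈ P, θ y < 1 := by
    intro y hy
    obtain ⟨c, hc, hyc⟩ := Set.mem_iUnion₂.1 hy
    exact hc.2 y hyc
  have hQθ : ∀ y ∈ Q, 0 < θ y := by
    intro y hy
    obtain ⟨c, hc, hyc⟩ := Set.mem_iUnion₂.1 hy
    exact (hcell c hc.1).resolve_left hc.2 y hyc
  have hPQ : ∀ y ∈ P ∩ Q, gridDim y < m := by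
    rintro y ⟨hyP, hyQ⟩
    obtain ⟨c, hc, hyc⟩ := Set.mem_iUnion₂.1 hyP
    obtain ⟨c', hc', hyc'⟩ := Set.mem_iUnion₂.1 hyQ
    exact gridDim_lt_of_mem_gridCell (by rintro rfl; exact hc'.2 hc.2) hyc hyc'
  have hPQθ : ∀ y ∈ P ∩ Q, θ y ∈ Set.Ioo (0 : ℝ) 1 := fun y hy ↦ ⟨hQθ y hy.2, hPθ y hy.1⟩
  have hFρ : Set.MapsTo F (P ∩ Q ∩ B) (X ∩ τ ⁻¹' Set.Ioo 0 1) := by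
    rintro y ⟨hy, hyB⟩
    refine ⟨hFX hyB, ?_⟩
    rw [Set.mem_preimage, hθF y hyB]
    exact hPQθ y hy
  obtain ⟨l, hl, hlL, hlF⟩ := exists_extension_cubical hL (c := fun _ ↦ 0) (e := fun _ ↦ N)
    (W := P ∩ Q ∩ B) (T := P ∩ Q) Set.inter_subset_left (Set.inter_subset_left.trans hPD)
    ((hPcl.inter hQcl).inter hBcl) ((hPc.inter hQc).inter hBc) (hPc.inter hQc)
    (fun y hy _ ↦ hPQ y hy) (hρ.comp (hF.mono Set.inter_subset_right) hFρ) (hρL.comp hFρ)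
  obtain ⟨M, hM, hMJ, hMF⟩ := exists_continuousOn_union (hPcl.inter hQcl) hBcl
    (hJ.comp_continuousOn (hθ.continuousOn.prodMk hl)) hF (by
      intro y hy
      simp only [Function.comp_apply, hlF hy]
      rw [← hθF y hy.2]
      exact hJρ _ (hFρ hy))
  have hMX : ∀ y ∈ P ∩ Q ∪ B, M y ∈ X ∧ τ (M y) = θ y := by
    rintro y (hy | hy)
    · rw [hMJ hy]
      exact ⟨hJX _ (hPQθ y hy) _ (hlL hy), hτJ _ (hPQθ y hy) _ (hlL hy)⟩
    · rw [hMF hy]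
      exact ⟨hFX hy, hθF y hy⟩
  have hdim : ∀ y : Fin m → ℝ, gridDim y < m + 1 := fun y ↦
    Nat.lt_succ_of_le ((Finset.card_le_univ _).trans_eq (Fintype.card_fin m))
  have hext : ∀ {R : Set (Fin m → ℝ)} {S : Set Z}, IsClosed R → IsCubical R → R ⊆ D →
      (∀ k, SphereExtends S k) → (∀ y ∈ R ∩ (P ∩ Q ∪ B), M y ∈ S) →
      ∃ g, ContinuousOn g R ∧ Set.MapsTo g R S ∧ Set.EqOn g M (R ∩ (P ∩ Q ∪ B)) := by
    intro R S hRcl hRc hRD hS hRS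
    exact exists_extension_cubical (d := m + 1) (fun k _ ↦ hS k) (c := fun _ ↦ 0) (e := fun _ ↦ N)
      Set.inter_subset_left hRD (hRcl.inter ((hPcl.inter hQcl).union hBcl))
      (hRc.inter ((hPc.inter hQc).union hBc)) hRc (fun y _ _ ↦ hdim y)
      (hM.mono Set.inter_subset_right) hRS
  obtain ⟨gP, hgP, hgPX, hgPM⟩ := hext hPcl hPc hPD hA fun y hy ↦
    ⟨(hMX y hy.2).1, (hMX y hy.2).2.trans_lt (hPθ y hy.1)⟩
  obtain ⟨gQ, hgQ, hgQX, hgQM⟩ := hext hQcl hQc hQD hB fun y hy ↦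
    ⟨(hMX y hy.2).1, (hQθ y hy.1).trans_eq (hMX y hy.2).2.symm⟩
  obtain ⟨g, hg, hgP', hgQ'⟩ := exists_continuousOn_union hPcl hQcl hgP hgQ fun y hy ↦
    (hgPM ⟨hy.1, Or.inl hy⟩).trans (hgQM ⟨hy.2, Or.inl hy⟩).symm
  have hgX : Set.MapsTo g (P ∪ Q) X := by
    rintro y (hy | hy)
    · rw [hgP' hy]; exact (hgPX hy).1
    · rw [hgQ' hy]; exact (hgQX hy).1
  have hgF : Set.EqOn g F B := by
    intro y hy
    rcases hDPQ (boxBoundary_subset _ _ hy) with h | h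
    · rw [hgP' h, hgPM ⟨h, Or.inr hy⟩, hMF hy]
    · rw [hgQ' h, hgQM ⟨h, Or.inr hy⟩, hMF hy]
  let ψ : EuclideanSpace ℝ (Fin m) → Fin m → ℝ := fun z ↦ (N : ℝ) • e z
  have hψ : Continuous ψ := by fun_prop
  have hψD : Set.MapsTo ψ (Metric.closedBall 0 1) D := by
    intro z hz
    obtain ⟨h1, h2⟩ : e z ∈ Set.Icc 0 1 := heb ▸ Set.mem_image_of_mem e hz
    refine ⟨fun j ↦ ?_, fun j ↦ ?_⟩
    · simpa [ψ] using mul_nonneg hNR.le (h1 j)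
    · simpa [ψ] using mul_le_of_le_one_right hNR.le (h2 j)
  have hψB : Set.MapsTo ψ (Metric.sphere 0 1) B := by
    intro z hz
    refine ⟨hψD (Metric.sphere_subset_closedBall hz), ?_⟩
    obtain ⟨-, j, -, hj⟩ : e z ∈ boxBoundary 0 1 := hes ▸ Set.mem_image_of_mem e hz
    refine ⟨j, by simpa using hNR.ne, ?_⟩
    rcases hj with h | h
    · left; simp [ψ, h]
    · right; simp [ψ, h]
  refine ⟨fun z ↦ g (ψ z), hg.comp hψ.continuousOn (hψD.mono_right hDPQ),
    hgX.comp (hψD.mono_right hDPQ), fun z hz ↦ ?_⟩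
  show g (ψ z) = f z
  rw [hgF (hψB hz)]
  simp [F, φ, ψ, smul_smul, hNR.ne']

theorem IsNConnected.sphereExtends {Z : Type*} [TopologicalSpace Z] {p : Z → Prop} {n : ℤ}
    (h : IsNConnected n {x // p x}) {k : ℕ} (hk : (k : ℤ) ≤ n + 1) :
    SphereExtends {x | p x} k := by
  intro f hf hfS
  cases k with
  | zero =>
    obtain ⟨x⟩ := h.1 (by push_cast at hk; linarith)
    refine ⟨fun _ ↦ x, continuousOn_const, fun _ _ ↦ x.2, fun z hz ↦ ?_⟩
    simp [Subsingleton.elim z 0] at hz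
  | succ i =>
    obtain ⟨g, hg⟩ := h.2 i (by push_cast at hk; linarith)
      ⟨fun z ↦ ⟨f z, hfS z.2⟩, (continuousOn_iff_continuous_domRestrict.1 hf).subtype_mk _⟩
    classical
    let g' : EuclideanSpace ℝ (Fin (i + 1)) → Z := fun z ↦
      if hz : z ∈ Metric.closedBall 0 1 then (g ⟨z, hz⟩).1 else f z
    have hg' : ∀ z (hz : z ∈ Metric.closedBall 0 1), g' z = (g ⟨z, hz⟩).1 :=
      fun z hz ↦ dif_pos hz
    refine ⟨g', ?_, fun z hz ↦ ?_, fun z hz ↦ ?_⟩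
    · rw [continuousOn_iff_continuous_domRestrict]
      exact (continuous_subtype_val.comp g.continuous).congr fun z ↦ (hg' z z.2).symm
    · rw [hg' z hz]
      exact (g ⟨z, hz⟩).2
    · rw [hg' z (Metric.sphere_subset_closedBall hz)]
      exact congrArg Subtype.val (hg ⟨z, hz⟩)

theorem isNConnected_of_sphereExtends {Z : Type*} [TopologicalSpace Z] [Nonempty Z] {p : Z → Prop}
    {n : ℤ} (h : ∀ k : ℕ, (k : ℤ) ≤ n + 1 → SphereExtends {x | p x} k) :
    IsNConnected n {x // p x} := by
  constructor
  · intro hn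
    obtain ⟨g, -, hg, -⟩ := h 0 (by push_cast; linarith) (fun _ ↦ Classical.arbitrary Z)
      continuousOn_const fun z hz ↦ by simp [Subsingleton.elim z 0] at hz
    exact ⟨⟨g 0, hg (by simp)⟩⟩
  · intro i hi f
    classical
    let f' : EuclideanSpace ℝ (Fin (i + 1)) → Z := fun z ↦
      if hz : z ∈ Metric.sphere 0 1 then (f ⟨z, hz⟩).1 else Classical.arbitrary Z
    have hf' : ∀ z (hz : z ∈ Metric.sphere 0 1), f' z = (f ⟨z, hz⟩).1 := fun z hz ↦ dif_pos hz
    obtain ⟨g, hg, hgS, hgf⟩ := h (i + 1) (by push_cast; linarith) f'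
      (by
        rw [continuousOn_iff_continuous_domRestrict]
        exact (continuous_subtype_val.comp f.continuous).congr fun z ↦ (hf' z z.2).symm)
      (fun z hz ↦ by rw [hf' z hz]; exact (f ⟨z, hz⟩).2)
    refine ⟨⟨fun z ↦ ⟨g z, hgS z.2⟩, (continuousOn_iff_continuous_domRestrict.1 hg).subtype_mk _⟩,
      fun z ↦ Subtype.ext ?_⟩
    exact (hgf z.2).trans (hf' z z.2)

/-- The underlying set of the geometric realization of the independence complex. -/
def indepRealization {V : Type*} (G : SimpleGraph V) : Set (V → ℝ) :=
  {f | (∀ v, 0 ≤ f v) ∧ (∑ᶠ v, f v) = 1 ∧ ∃ s ∈ indepFaces G, {v | f v ≠ 0} = ↑s}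

theorem mem_indepRealization {V : Type*} [Finite V] {G : SimpleGraph V} {f : V → ℝ} :
    f ∈ indepRealization G ↔ (∀ v, 0 ≤ f v) ∧ (∑ᶠ v, f v) = 1 ∧
      ∀ a b, f a ≠ 0 → f b ≠ 0 → ¬ G.Adj a b := by
  refine and_congr_right fun _ ↦ and_congr_right fun _ ↦ ⟨?_, fun h ↦ ?_⟩
  · rintro ⟨s, hs, hfs⟩ a b ha hb
    have h : ∀ c, f c ≠ 0 → c ∈ s := fun c hc ↦ by
      have : c ∈ {v | f v ≠ 0} := hc
      rwa [hfs] at this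
    exact hs a (h a ha) b (h b hb)
  · refine ⟨(Set.toFinite {v | f v ≠ 0}).toFinset, fun a ha b hb ↦ ?_, by simp⟩
    exact h a b (by simpa using ha) (by simpa using hb)

theorem sum_eq_one_of_mem_indepRealization {V : Type*} [Fintype V] {G : SimpleGraph V} {f : V → ℝ}
    (hf : f ∈ indepRealization G) : ∑ w, f w = 1 := by
  rw [← finsum_eq_sum_of_fintype]
  exact hf.2.1

theorem le_one_of_mem_indepRealization {V : Type*} [Fintype V] {G : SimpleGraph V} {f : V → ℝ}
    (hf : f ∈ indepRealization G) (v : V) : f v ≤ 1 := by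
  rw [← sum_eq_one_of_mem_indepRealization hf]
  exact Finset.single_le_sum (fun w _ ↦ hf.1 w) (Finset.mem_univ v)

theorem single_mem_indepRealization {V : Type*} [Fintype V] [DecidableEq V] (G : SimpleGraph V)
    (v : V) : Pi.single v 1 ∈ indepRealization G := by
  refine mem_indepRealization.2 ⟨fun w ↦ ?_, ?_, fun a b ha hb ↦ ?_⟩
  · by_cases h : w = v <;> simp [h]
  · rw [finsum_eq_sum_of_fintype]
    simp
  · simp only [Pi.single_apply, ne_eq, ite_eq_right_iff, one_ne_zero, imp_false, not_not] at ha hb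
    simp [ha, hb]

/-- The open star of `v` contracts linearly to `v`. -/
theorem sphereExtends_openStar {V : Type*} [Fintype V] (G : SimpleGraph V) (v : V) (k : ℕ) :
    SphereExtends (indepRealization G ∩ {x | 0 < x v}) k := by
  classical
  let H : (V → ℝ) × ℝ → V → ℝ := fun q w ↦
    (1 - q.2) * q.1 w + q.2 * (Pi.single v 1 : V → ℝ) w
  have hp : Pi.single v 1 ∈ indepRealization G ∩ {x | 0 < x v} :=
    ⟨single_mem_indepRealization G v, by simp⟩
  refine SphereExtends.of_contraction (H := H) hp (by fun_prop) ?_ ?_ ?_ k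
  · rintro ⟨x, s⟩ ⟨⟨hx, hxv⟩, hs0, hs1⟩
    have hxv : 0 < x v := hxv
    have hs0 : 0 ≤ s := hs0
    have hs1 : s ≤ 1 := hs1
    obtain ⟨hnn, -, hadj⟩ := mem_indepRealization.1 hx
    have hsum := sum_eq_one_of_mem_indepRealization hx
    have hsupp : ∀ w, H (x, s) w ≠ 0 → x w ≠ 0 := by
      intro w hw hw0
      by_cases h : w = v
      · exact hxv.ne' (h ▸ hw0)
      · simp [H, hw0, h] at hw
    refine ⟨mem_indepRealization.2 ⟨fun w ↦ ?_, ?_,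
      fun a b ha hb ↦ hadj a b (hsupp a ha) (hsupp b hb)⟩, ?_⟩
    · exact add_nonneg (mul_nonneg (by linarith) (hnn w))
        (mul_nonneg hs0 ((single_mem_indepRealization G v).1 w))
    · rw [finsum_eq_sum_of_fintype]
      simp only [H, Finset.sum_add_distrib, ← Finset.mul_sum, hsum]
      simp
    · show 0 < (1 - s) * x v + s * (Pi.single v 1 : V → ℝ) v
      rw [Pi.single_eq_same]
      rcases hs0.eq_or_lt with h | h
      · rw [← h]; linarith
      · have := mul_nonneg (sub_nonneg.2 hs1) hxv.le
        linarith
  · intro x _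
    ext w; simp [H]
  · intro x _
    ext w; simp [H]

/-- If `u` is only adjacent to `v`, the complement of `v` contracts to `u`. -/
theorem sphereExtends_compl_of_pendant {V : Type*} [Fintype V] (G : SimpleGraph V) {u v : V}
    (huv : G.neighborSet u = {v}) (k : ℕ) :
    SphereExtends (indepRealization G ∩ {x | x v < 1}) k := by
  classical
  have hu : ∀ b, G.Adj u b → b = v := fun b hb ↦ by
    have : b ∈ G.neighborSet u := hb
    simpa [huv] using this
  have huv' : u ≠ v := by
    have : v ∈ G.neighborSet u := by simp [huv]
    exact G.ne_of_adj this
  let den : (V → ℝ) × ℝ → ℝ := fun q ↦ (1 - q.2) * (1 - q.1 v) + |q.2 - q.1 v|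
  let num : (V → ℝ) × ℝ → V → ℝ := fun q w ↦
    (1 - q.2) * (q.1 w - q.1 v * (Pi.single v 1 : V → ℝ) w) +
      max (q.1 v - q.2) 0 * (Pi.single v 1 : V → ℝ) w +
      max (q.2 - q.1 v) 0 * (Pi.single u 1 : V → ℝ) w
  have hden : ∀ q ∈ (indepRealization G ∩ {x | x v < 1}) ×ˢ Set.Icc (0 : ℝ) 1, 0 < den q := by
    rintro ⟨x, s⟩ ⟨⟨-, hxv⟩, -, hs1⟩
    have hxv : x v < 1 := hxv
    have hs1 : s ≤ 1 := hs1
    rcases hs1.eq_or_lt with rfl | h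
    · exact add_pos_of_nonneg_of_pos (by simp) (abs_pos.2 (by linarith))
    · exact add_pos_of_pos_of_nonneg (mul_pos (by linarith) (by linarith)) (abs_nonneg _)
  have hmax : ∀ r : ℝ, max (-r) 0 + max r 0 = |r| := fun r ↦ by
    rcases le_total 0 r with h | h
    · rw [abs_of_nonneg h, max_eq_left h, max_eq_right (by linarith), zero_add]
    · rw [abs_of_nonpos h, max_eq_right h, max_eq_left (by linarith), add_zero]
  have hp : Pi.single u 1 ∈ indepRealization G ∩ {x | x v < 1} :=
    ⟨single_mem_indepRealization G u, by simp [huv'.symm]⟩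
  refine SphereExtends.of_contraction (H := fun q w ↦ num q w / den q) hp ?_ ?_ ?_ ?_ k
  · refine continuousOn_pi.2 fun w ↦ ContinuousOn.div ?_ ?_ fun q hq ↦ (hden q hq).ne'
    · exact Continuous.continuousOn (by fun_prop)
    · exact Continuous.continuousOn (by fun_prop)
  · rintro ⟨x, s⟩ hq
    have hd := hden _ hq
    obtain ⟨⟨hx, hxv⟩, hs0, hs1⟩ := hq
    have hxv : x v < 1 := hxv
    have hs0 : 0 ≤ s := hs0
    have hs1 : s ≤ 1 := hs1
    obtain ⟨hnn, -, hadj⟩ := mem_indepRealization.1 hx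
    have hsum := sum_eq_one_of_mem_indepRealization hx
    have hv : num (x, s) v = max (x v - s) 0 := by simp [num, huv'.symm]
    have hother : ∀ w, w ≠ v → w ≠ u → num (x, s) w = (1 - s) * x w := by
      intro w hwv hwu
      simp [num, hwv, hwu]
    have hunum : num (x, s) u = (1 - s) * x u + max (s - x v) 0 := by simp [num, huv']
    have hnumnn : ∀ w, 0 ≤ num (x, s) w := by
      intro w
      by_cases hwv : w = v
      · rw [hwv, hv]; exact le_max_right _ _
      have h1 := mul_nonneg (sub_nonneg.2 hs1) (hnn w)
      by_cases hwu : w = u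
      · rw [hwu, hunum]
        exact add_nonneg (hwu ▸ h1) (le_max_right _ _)
      · rw [hother w hwv hwu]; exact h1
    have hnum_v : num (x, s) v ≠ 0 → s < x v := by
      rw [hv]
      intro h
      by_contra! h'
      exact h (max_eq_right (by linarith))
    have hsupp : ∀ w, num (x, s) w ≠ 0 → x w ≠ 0 ∨ w = u ∧ x v < s := by
      intro w hw
      by_cases hwv : w = v
      · subst hwv
        exact Or.inl (hs0.trans_lt (hnum_v hw)).ne'
      by_cases hwu : w = u
      · rw [or_iff_not_imp_left, not_not]
        intro hxw
        refine ⟨hwu, ?_⟩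
        by_contra! h'
        subst hwu
        rw [hunum, hxw, max_eq_right (by linarith)] at hw
        simp at hw
      · rw [hother w hwv hwu] at hw
        exact Or.inl (right_ne_zero_of_mul hw)
    have hnadj : ∀ b, x v < s → num (x, s) b ≠ 0 → ¬ G.Adj u b := by
      intro b hs hb hadj
      obtain rfl := hu b hadj
      exact hs.not_gt (hnum_v hb)
    refine ⟨mem_indepRealization.2 ⟨fun w ↦ div_nonneg (hnumnn w) hd.le, ?_, fun a b ha hb ↦ ?_⟩, ?_⟩
    · have h1 : ∑ w, num (x, s) w = den (x, s) := by
        simp only [num, den, Finset.sum_add_distrib, ← Finset.mul_sum, Finset.sum_sub_distrib, hsum]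
        rw [← hmax (s - x v)]
        simp [add_assoc]
      rw [finsum_eq_sum_of_fintype, ← Finset.sum_div, h1, div_self hd.ne']
    · have ha := (div_ne_zero_iff.1 ha).1
      have hb := (div_ne_zero_iff.1 hb).1
      rcases hsupp a ha with ha' | ⟨rfl, hs⟩
      · rcases hsupp b hb with hb' | ⟨rfl, hs⟩
        · exact hadj a b ha' hb'
        · exact fun h ↦ hnadj a hs ha h.symm
      · exact hnadj b hs hb
    · show num (x, s) v / den (x, s) < 1
      rw [div_lt_one hd, hv]
      rcases le_total s (x v) with h | h
      · rw [max_eq_left (by linarith)]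
        have h1 : |s - x v| = x v - s := by rw [abs_of_nonpos (by linarith)]; ring
        have h2 : 0 < (1 - s) * (1 - x v) := mul_pos (by linarith) (by linarith)
        simp only [den, h1]
        linarith
      · rwa [max_eq_right (by linarith)]
  · rintro x ⟨hx, -⟩
    have h0 : 0 ≤ x v := hx.1 v
    ext w
    have h1 : den (x, 0) = 1 := by simp [den, abs_of_nonneg h0]
    simp [h1, num, h0]
  · rintro x ⟨hx, hxv⟩
    have hxv : x v < 1 := hxv
    ext w
    have h1 : den (x, 1) = 1 - x v := by simp [den, abs_of_nonneg, hxv.le]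
    have h2 : 1 - x v ≠ 0 := by linarith
    simp [h1, num, hxv.le, h2]

/-- If `N(u) = {v}` and `Ind(G \ Ṅ(v))` is `(n-1)`-connected, then
`Ind(G)` is `n`-connected. -/
theorem indComplex_nconnected_of_pendant {V : Type*} [Fintype V]
    (G : SimpleGraph V) (u v : V) (huv : G.neighborSet u = {v}) (n : ℤ)
    (h : IsNConnected (n - 1) (realization (indepFaces (G.induce (G.closedNbhd v)ᶜ)))) :
    IsNConnected n (realization (indepFaces G)) := by
  classical
  set S : Set V := (G.closedNbhd v)ᶜ with hS
  have hvS : v ∉ S := by simp [hS, SimpleGraph.closedNbhd]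
  have hnS : ∀ w ∈ S, ¬ G.Adj v w := by
    intro w hw hadj
    exact hw (Set.mem_insert_of_mem _ hadj)
  have hSn : ∀ w, w ∉ S → w ≠ v → G.Adj v w := by
    intro w hw hwv
    simpa [hS, SimpleGraph.closedNbhd, hwv] using hw
  let J : ℝ × (S → ℝ) → V → ℝ := fun q w ↦
    (if w = v then q.1 else 0) + if hw : w ∈ S then (1 - q.1) * q.2 ⟨w, hw⟩ else 0
  let ρ : (V → ℝ) → S → ℝ := fun x w ↦ x w / (1 - x v)
  have hJv : ∀ q, J q v = q.1 := fun q ↦ by simp [J, hvS]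
  have hJS : ∀ q (w : S), J q w = (1 - q.1) * q.2 w := by
    rintro q ⟨w, hw⟩
    have hwv : w ≠ v := fun h ↦ hvS (h ▸ hw)
    simp [J, hw, hwv]
  have hJ0 : ∀ q w, w ∉ S → w ≠ v → J q w = 0 := fun q w hw hwv ↦ by simp [J, hw, hwv]
  have hsumS : ∀ x : V → ℝ, (∀ w, w ∉ S → w ≠ v → x w = 0) →
      ∑ w, x w = x v + ∑ᶠ w : S, x w := by
    intro x hx
    have h1 : ∀ w, x w = (Pi.single v (x v) : V → ℝ) w + S.indicator x w := by
      intro w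
      by_cases hwv : w = v
      · subst hwv; simp [hvS]
      by_cases hwS : w ∈ S
      · simp [hwv, hwS]
      · simp [hwv, hwS, hx w hwS hwv]
    rw [finsum_set_coe_eq_finsum_mem, finsum_mem_def, finsum_eq_sum_of_fintype,
      Finset.sum_congr rfl fun w _ ↦ h1 w, Finset.sum_add_distrib]
    simp
  have hX0 : ∀ x ∈ indepRealization G, 0 < x v → ∀ w, w ∉ S → w ≠ v → x w = 0 := by
    intro x hx hxv w hw hwv
    by_contra hxw
    exact (mem_indepRealization.1 hx).2.2 v w hxv.ne' hxw (hSn w hw hwv)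
  have hXn : ∀ k : ℕ, (k : ℤ) ≤ n + 1 → SphereExtends (indepRealization G) k := by
    intro k hk
    refine SphereExtends.of_cover (L := indepRealization (G.induce S)) (τ := fun x ↦ x v)
      (ρ := ρ) (J := J) (by fun_prop)
      (fun x hx ↦ ⟨hx.1 v, le_one_of_mem_indepRealization hx v⟩) ?_ ?_ ?_ ?_
      (fun t _ l _ ↦ hJv (t, l)) ?_ (sphereExtends_compl_of_pendant G huv)
      (sphereExtends_openStar G v) fun j hj ↦ ?_
    · refine continuousOn_pi.2 fun w ↦ ContinuousOn.div (by fun_prop) (by fun_prop) ?_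
      rintro x ⟨-, -, hx1⟩
      exact (sub_pos.2 hx1).ne'
    · rintro x ⟨hx, hx0, hx1⟩
      have h1 : 0 < 1 - x v := sub_pos.2 hx1
      obtain ⟨hnn, -, hadj⟩ := mem_indepRealization.1 hx
      refine mem_indepRealization.2 ⟨fun w ↦ div_nonneg (hnn w) h1.le, ?_, fun a b ha hb ↦ ?_⟩
      · have h2 := hsumS x (hX0 x hx hx0)
        rw [sum_eq_one_of_mem_indepRealization hx] at h2
        simp only [ρ, div_eq_mul_inv]
        rw [← finsum_mul, eq_sub_iff_add_eq'.2 h2.symm, mul_inv_cancel₀ h1.ne']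
      · exact hadj a b (div_ne_zero_iff.1 ha).1 (div_ne_zero_iff.1 hb).1
    · refine continuous_pi fun w ↦ ?_
      by_cases hwv : w = v <;> by_cases hw : w ∈ S <;> simp only [J, hwv, hw, hvS] <;>
        simp <;> fun_prop
    · rintro t ⟨ht0, ht1⟩ l hl
      obtain ⟨hnn, hsum, hadj⟩ := mem_indepRealization.1 hl
      have hsupp : ∀ w, J (t, l) w ≠ 0 → w = v ∨ ∃ w' : S, w' = w ∧ l w' ≠ 0 := by
        intro w hw
        by_cases hwv : w = v
        · exact Or.inl hwv
        by_cases hwS : w ∈ S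
        · rw [hJS _ ⟨w, hwS⟩] at hw
          exact Or.inr ⟨⟨w, hwS⟩, rfl, right_ne_zero_of_mul hw⟩
        · exact absurd (hJ0 _ w hwS hwv) hw
      refine mem_indepRealization.2 ⟨fun w ↦ ?_, ?_, fun a b ha hb ↦ ?_⟩
      · by_cases hwv : w = v
        · rw [hwv, hJv]; exact ht0.le
        by_cases hwS : w ∈ S
        · rw [hJS _ ⟨w, hwS⟩]
          exact mul_nonneg (sub_pos.2 ht1).le (hnn _)
        · rw [hJ0 _ w hwS hwv]
      · rw [finsum_eq_sum_of_fintype, hsumS _ (hJ0 (t, l)), hJv]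
        simp only [hJS]
        rw [← mul_finsum, hsum]
        ring
      · rcases hsupp a ha with rfl | ⟨a', rfl, ha'⟩
        · rcases hsupp b hb with rfl | ⟨b', rfl, hb'⟩
          · exact G.irrefl
          · exact hnS _ b'.2
        · rcases hsupp b hb with rfl | ⟨b', rfl, hb'⟩
          · exact fun h ↦ hnS _ a'.2 h.symm
          · exact hadj a' b' ha' hb'
    · rintro x ⟨hx, hx0, hx1⟩
      have h1 : 1 - x v ≠ 0 := (sub_pos.2 hx1).ne'
      ext w
      by_cases hwv : w = v
      · rw [hwv, hJv]
      by_cases hwS : w ∈ S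
      · rw [hJS _ ⟨w, hwS⟩]
        exact mul_div_cancel₀ _ h1
      · rw [hJ0 _ w hwS hwv, hX0 x hx hx0 w hwS hwv]
    · exact IsNConnected.sphereExtends h (by omega)
  exact isNConnected_of_sphereExtends hXn
end
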